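/- Let n ≥ 3 and let f ∈ Out(F_n) have order 2. Assume that f cannot be lifted to a finite order element of Aut(F_n), i.e., no element of Aut(F_n) of finite order projects to f under the quotient map Aut(F_n) → Out(F_n). Then N(f) = SOut(F_n) if det(ρ̄(f)) = 1, and N(f) = Out(F_n) if det(ρ̄(f)) = −1. -/

import Mathlib

open Matrix

namespace NormalClosurePaper

/-- The automorphism group of the free group on `n` generators. -/
abbrev FrAut (n : ℕ) := MulAut (FreeGroup (Fin n))

/-- Exponent sum of the generator `x_i` in a word of the free group. -/
def expSum {n : ℕ} (i : Fin n) : FreeGroup (Fin n) →* Multiplicative ℤ :=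
  FreeGroup.lift fun j => Multiplicative.ofAdd (if j = i then (1 : ℤ) else 0)

/-- The abelianized matrix of an automorphism of the free group:
the `(i, j)` entry is the exponent sum of `x_i` in `f x_j`. -/
def mat {n : ℕ} (f : FrAut n) : Matrix (Fin n) (Fin n) ℤ :=
  Matrix.of fun i j => (expSum i (f (FreeGroup.of j))).toAdd

lemma expSum_apply {n : ℕ} (f : FrAut n) (i : Fin n) (w : FreeGroup (Fin n)) :
    (expSum i (f w)).toAdd = ∑ k, mat f i k * (expSum k w).toAdd := by
  induction w using FreeGroup.induction_on with
  | C1 => simp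
  | of j =>
      have h : (expSum i (f (FreeGroup.of j))).toAdd = mat f i j := rfl
      rw [h]
      simp [expSum, mul_ite, Finset.sum_ite_eq]
  | inv_of j ih =>
      simp only [_root_.map_inv, toAdd_inv, mul_neg, Finset.sum_neg_distrib, ih]
  | mul x y ihx ihy =>
      simp only [_root_.map_mul, toAdd_mul, mul_add, Finset.sum_add_distrib, ihx, ihy]

lemma mat_one {n : ℕ} : mat (1 : FrAut n) = 1 := by
  ext i j
  simp [mat, expSum, Matrix.one_apply, eq_comm]

lemma mat_mul {n : ℕ} (f g : FrAut n) : mat (f * g) = mat f * mat g := by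
  ext i j
  rw [Matrix.mul_apply]
  show (expSum i ((f * g) (FreeGroup.of j))).toAdd = _
  rw [show (f * g) (FreeGroup.of j) = f (g (FreeGroup.of j)) from rfl, expSum_apply]
  rfl

/-- The matrix of the induced map on the abelianization, as a monoid homomorphism. -/
def matHom (n : ℕ) : FrAut n →* Matrix (Fin n) (Fin n) ℤ where
  toFun := mat
  map_one' := mat_one
  map_mul' := mat_mul

/-- The homomorphism `Aut(F_n) → GL_n(ℤ)` induced by abelianization. -/
def ρ (n : ℕ) : FrAut n →* GL (Fin n) ℤ := (matHom n).toHomUnits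

/-- The composition of `ρ` with the determinant. -/
def detρ (n : ℕ) : FrAut n →* ℤˣ := (Matrix.GeneralLinearGroup.det).comp (ρ n)

/-- The special automorphism group `SAut(F_n)`: automorphisms whose induced matrix
has determinant `1`. -/
def SAut (n : ℕ) : Subgroup (FrAut n) := (detρ n).ker

/-- The Torelli subgroup `IA_n`, the kernel of `ρ`. -/
def IA (n : ℕ) : Subgroup (FrAut n) := (ρ n).ker

/-- The group of inner automorphisms of the free group. -/
def Inn (n : ℕ) : Subgroup (FrAut n) := (MulAut.conj (G := FreeGroup (Fin n))).range

instance Inn_normal (n : ℕ) : (Inn n).Normal := by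
  constructor
  rintro - ⟨a, rfl⟩ g
  refine ⟨g a, ?_⟩
  ext y
  simp [MulAut.conj_apply, MulAut.mul_apply, _root_.map_mul, _root_.map_inv]

/-- The outer automorphism group `Out(F_n)`. -/
abbrev OutF (n : ℕ) := FrAut n ⧸ Inn n

/-- The projection `Aut(F_n) → Out(F_n)`. -/
def toOut (n : ℕ) : FrAut n →* OutF n := QuotientGroup.mk' (Inn n)

lemma mat_conj {n : ℕ} (g : FreeGroup (Fin n)) : mat (MulAut.conj g) = 1 := by
  rw [← mat_one (n := n)]
  ext i j
  simp only [mat, Matrix.of_apply, MulAut.conj_apply, MulAut.one_apply, _root_.map_mul,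
    _root_.map_inv, toAdd_mul, toAdd_inv]
  omega

lemma ρ_conj {n : ℕ} (g : FreeGroup (Fin n)) : ρ n (MulAut.conj g) = 1 :=
  Units.ext (mat_conj g)

/-- The homomorphism `Out(F_n) → GL_n(ℤ)` induced by abelianization. -/
def ρOut (n : ℕ) : OutF n →* GL (Fin n) ℤ :=
  QuotientGroup.lift (Inn n) (ρ n) (by rintro - ⟨g, rfl⟩; exact ρ_conj g)

/-- The composition of `ρOut` with the determinant. -/
def detρOut (n : ℕ) : OutF n →* ℤˣ := (Matrix.GeneralLinearGroup.det).comp (ρOut n)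

/-- The special outer automorphism group `SOut(F_n)`. -/
def SOut (n : ℕ) : Subgroup (OutF n) := (detρOut n).ker

/-- Entrywise reduction `GL_n(ℤ) → GL_n(ℤ/ℓℤ)`. -/
def redGL (n ℓ : ℕ) : GL (Fin n) ℤ →* GL (Fin n) (ZMod ℓ) :=
  Units.map (RingHom.mapMatrix (Int.castRingHom (ZMod ℓ))).toMonoidHom

/-- The subgroup `GΓ_n(ℓ)` of `GL_n(ℤ)` of matrices congruent to the identity mod `ℓ`. -/
def GGamma (n ℓ : ℕ) : Subgroup (GL (Fin n) ℤ) := (redGL n ℓ).ker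

/-- The level `ℓ` congruence subgroup `Γ_n(ℓ)` (viewed inside `GL_n(ℤ)`): matrices with
determinant `1` that are congruent to the identity mod `ℓ`. -/
def GammaGL (n ℓ : ℕ) : Subgroup (GL (Fin n) ℤ) :=
  GGamma n ℓ ⊓ (Matrix.GeneralLinearGroup.det).ker

/-- Reduction `SL_n(ℤ) → SL_n(ℤ/ℓℤ)`. -/
def redSL (n ℓ : ℕ) : Matrix.SpecialLinearGroup (Fin n) ℤ →*
    Matrix.SpecialLinearGroup (Fin n) (ZMod ℓ) :=
  Matrix.SpecialLinearGroup.map (Int.castRingHom (ZMod ℓ))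

/-- Projection `SL_n(ℤ/ℓℤ) → PSL_n(ℤ/ℓℤ)`. -/
def projPSL (n ℓ : ℕ) : Matrix.SpecialLinearGroup (Fin n) (ZMod ℓ) →*
    Matrix.ProjectiveSpecialLinearGroup (Fin n) (ZMod ℓ) :=
  QuotientGroup.mk' _

open scoped Pointwise

section Cuts

variable {G : Type*} [Group G]

/-- The edges of the Cayley graph of `G` with respect to `S` that leave `A`, an edge from `x` to
`x * s` being encoded as `(x, s)`. -/
def edgeBoundary (S A : Set G) : Set (G × G) :=
  {p | p.2 ∈ S ∧ p.1 ∈ A ∧ p.1 * p.2 ∉ A}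

/-- `A` is a cut of the Cayley graph: it has finite boundary, and both sides are infinite. -/
structure IsCut (S A : Set G) : Prop where
  finite : (edgeBoundary S A).Finite
  infinite : A.Infinite
  compl : Aᶜ.Infinite

/-- A cut whose boundary has the least possible number of edges. -/
structure IsThinCut (S A : Set G) : Prop extends IsCut S A where
  min : ∀ B, IsCut S B → (edgeBoundary S A).ncard ≤ (edgeBoundary S B).ncard

variable {S A B : Set G}

lemma edgeBoundary_compl (hS : ∀ s ∈ S, s⁻¹ ∈ S) :
    edgeBoundary S Aᶜ = (fun p : G × G => (p.1 * p.2, p.2⁻¹)) '' edgeBoundary S A := by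
  ext ⟨x, s⟩
  simp only [edgeBoundary, Set.mem_ofPred_eq, Set.mem_compl_iff, not_not, Set.mem_image,
    Prod.mk.injEq, Prod.exists]
  constructor
  · rintro ⟨h1, h2, h3⟩
    exact ⟨x * s, s⁻¹, ⟨hS s h1, h3, by simpa using h2⟩, by simp, by simp⟩
  · rintro ⟨y, t, ⟨h1, h2, h3⟩, rfl, rfl⟩
    exact ⟨hS t h1, h3, by simpa using h2⟩

lemma ncard_edgeBoundary_compl (hS : ∀ s ∈ S, s⁻¹ ∈ S) :
    (edgeBoundary S Aᶜ).ncard = (edgeBoundary S A).ncard := by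
  rw [edgeBoundary_compl hS]
  apply Set.ncard_image_of_injective
  rintro ⟨x, s⟩ ⟨y, t⟩ h
  simp only [Prod.mk.injEq, _root_.inv_inj] at h
  obtain ⟨h1, rfl⟩ := h
  simpa using h1

lemma IsCut.compl_isCut (hS : ∀ s ∈ S, s⁻¹ ∈ S) (h : IsCut S A) : IsCut S Aᶜ :=
  ⟨by rw [edgeBoundary_compl hS]; exact h.finite.image _, h.compl, by simpa using h.infinite⟩

lemma IsThinCut.compl_isThinCut (hS : ∀ s ∈ S, s⁻¹ ∈ S) (h : IsThinCut S A) :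
    IsThinCut S Aᶜ :=
  ⟨h.toIsCut.compl_isCut hS, by rw [ncard_edgeBoundary_compl hS]; exact h.min⟩

lemma edgeBoundary_smul (g : G) :
    edgeBoundary S (g • A) = (fun p : G × G => (g * p.1, p.2)) '' edgeBoundary S A := by
  ext ⟨x, s⟩
  simp only [edgeBoundary, Set.mem_ofPred_eq, Set.mem_smul_set_iff_inv_smul_mem, smul_eq_mul,
    Set.mem_image, Prod.mk.injEq, Prod.exists]
  constructor
  · rintro ⟨h1, h2, h3⟩
    exact ⟨g⁻¹ * x, s, ⟨h1, h2, by simpa [mul_assoc] using h3⟩, by simp, rfl⟩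
  · rintro ⟨y, t, ⟨h1, h2, h3⟩, rfl, rfl⟩
    exact ⟨h1, by simpa using h2, by simpa [mul_assoc] using h3⟩

lemma IsThinCut.smul (h : IsThinCut S A) (g : G) : IsThinCut S (g • A) := by
  refine ⟨⟨?_, ?_, ?_⟩, ?_⟩
  · rw [edgeBoundary_smul]; exact h.finite.image _
  · exact h.infinite.smul_set
  · rw [← Set.smul_set_compl]; exact h.compl.smul_set
  · rw [edgeBoundary_smul, Set.ncard_image_of_injective]
    · exact h.min
    · rintro ⟨x, s⟩ ⟨y, t⟩ h
      simpa using h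

lemma edgeBoundary_inter_subset :
    edgeBoundary S (A ∩ B) ⊆ edgeBoundary S A ∪ edgeBoundary S B := by
  rintro ⟨x, s⟩ ⟨h1, ⟨h2, h3⟩, h4⟩
  by_cases h : x * s ∈ A
  · exact Or.inr ⟨h1, h3, fun h' => h4 ⟨h, h'⟩⟩
  · exact Or.inl ⟨h1, h2, h⟩

lemma edgeBoundary_union_subset :
    edgeBoundary S (A ∪ B) ⊆ edgeBoundary S A ∪ edgeBoundary S B := by
  rintro ⟨x, s⟩ ⟨h1, h2 | h2, h4⟩
  · exact Or.inl ⟨h1, h2, fun h' => h4 (Or.inl h')⟩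
  · exact Or.inr ⟨h1, h2, fun h' => h4 (Or.inr h')⟩

lemma ncard_edgeBoundary_inter_add_union (hA : (edgeBoundary S A).Finite)
    (hB : (edgeBoundary S B).Finite) :
    (edgeBoundary S (A ∩ B)).ncard + (edgeBoundary S (A ∪ B)).ncard ≤
      (edgeBoundary S A).ncard + (edgeBoundary S B).ncard := by
  have hU := hA.union hB
  have h1 := hU.subset (edgeBoundary_inter_subset (A := A) (B := B))
  have h2 := hU.subset (edgeBoundary_union_subset (A := A) (B := B))
  rw [← Set.ncard_union_add_ncard_inter _ _ h1 h2, ← Set.ncard_union_add_ncard_inter _ _ hA hB]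
  refine add_le_add (Set.ncard_le_ncard (Set.union_subset edgeBoundary_inter_subset
    edgeBoundary_union_subset) hU) (Set.ncard_le_ncard ?_ (hA.inter_of_left _))
  rintro ⟨x, s⟩ ⟨⟨h1, ⟨h2, h3⟩, -⟩, -, -, h5⟩
  exact ⟨⟨h1, h2, fun h => h5 (Or.inl h)⟩, ⟨h1, h3, fun h => h5 (Or.inr h)⟩⟩

/-- The intersection of two thin cuts is thin, if the opposite corner is infinite as well. -/
lemma IsThinCut.inter (hA : IsThinCut S A) (hB : IsThinCut S B) (h : (A ∩ B).Infinite)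
    (h' : (A ∪ B)ᶜ.Infinite) : IsThinCut S (A ∩ B) := by
  have hU := hA.finite.union hB.finite
  have c1 : IsCut S (A ∩ B) := ⟨hU.subset edgeBoundary_inter_subset, h,
    h'.mono (Set.compl_subset_compl.2 (Set.inter_subset_left.trans Set.subset_union_left))⟩
  have c2 : IsCut S (A ∪ B) := ⟨hU.subset edgeBoundary_union_subset,
    h.mono (Set.inter_subset_left.trans Set.subset_union_left), h'⟩
  have := ncard_edgeBoundary_inter_add_union hA.finite hB.finite
  refine ⟨c1, fun C hC => ?_⟩
  have e1 := hA.min _ c2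
  have e2 := hB.min _ hC
  omega

lemma edgeBoundary_nonempty (hS : Subgroup.closure S = ⊤) (hinv : ∀ s ∈ S, s⁻¹ ∈ S)
    (hA : A.Nonempty) (hA' : A ≠ Set.univ) : (edgeBoundary S A).Nonempty := by
  by_contra hne
  have key : ∀ x ∈ A, ∀ s ∈ S, x * s ∈ A := by
    intro x hx s hs
    by_contra h
    exact hne ⟨(x, s), hs, hx, h⟩
  obtain ⟨a, ha⟩ := hA
  apply hA'
  have : ∀ g ∈ Subgroup.closure S, ∀ x ∈ A, x * g ∈ A := by
    intro g hg
    induction hg using Subgroup.closure_induction'' with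
    | mem s hs => exact fun x hx => key x hx s hs
    | inv_mem s hs => exact fun x hx => key x hx _ (hinv s hs)
    | one => simp
    | mul g h _ _ ihg ihh => exact fun x hx => by rw [← mul_assoc]; exact ihh _ (ihg x hx)
  refine Set.eq_univ_of_forall fun g => ?_
  simpa using this (a⁻¹ * g) (by simp [hS]) a ha

/-- A thin cut is connected in the Cayley graph. -/
lemma IsThinCut.connected (hS : Subgroup.closure S = ⊤) (hinv : ∀ s ∈ S, s⁻¹ ∈ S)
    (hA : IsThinCut S A) {T : Set G} (hTA : T ⊆ A) (hT : T.Nonempty)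
    (hcl : ∀ x ∈ T, ∀ s ∈ S, x * s ∈ A → x * s ∈ T) : T = A := by
  by_contra hne
  have hU : (A \ T).Nonempty := by
    rw [Set.nonempty_iff_ne_empty, Ne, Set.sdiff_eq_empty]
    exact fun h => hne (hTA.antisymm h)
  have hun : ∀ X, X ⊆ A → X ≠ Set.univ := by
    rintro X hX rfl
    exact hA.compl (by simp [Set.univ_subset_iff.1 hX])
  have e1 : edgeBoundary S T ⊆ edgeBoundary S A := by
    rintro ⟨x, s⟩ ⟨h1, h2, h3⟩
    exact ⟨h1, hTA h2, fun h => h3 (hcl x h2 s h1 h)⟩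
  have e2 : edgeBoundary S (A \ T) ⊆ edgeBoundary S A := by
    rintro ⟨x, s⟩ ⟨h1, h2, h3⟩
    refine ⟨h1, h2.1, fun h => h3 ⟨h, fun h' => h2.2 ?_⟩⟩
    simpa using hcl _ h' s⁻¹ (hinv s h1) (by simpa using h2.1)
  have hdisj : Disjoint (edgeBoundary S T) (edgeBoundary S (A \ T)) := by
    rw [Set.disjoint_left]
    rintro ⟨x, s⟩ ⟨h1, h2, h3⟩ ⟨-, h5, -⟩
    exact h5.2 h2
  have f1 := hA.finite.subset e1
  have f2 := hA.finite.subset e2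
  have hcard : (edgeBoundary S T).ncard + (edgeBoundary S (A \ T)).ncard ≤
      (edgeBoundary S A).ncard := by
    rw [← Set.ncard_union_eq hdisj f1 f2]
    exact Set.ncard_le_ncard (Set.union_subset e1 e2) hA.finite
  have p1 := (Set.ncard_pos f1).2 (edgeBoundary_nonempty hS hinv hT (hun _ hTA))
  have p2 := (Set.ncard_pos f2).2 (edgeBoundary_nonempty hS hinv hU (hun _ Set.sdiff_subset))
  by_cases hfin : T.Finite
  · have := hA.min (A \ T) ⟨f2, hA.infinite.sdiff hfin,
      hA.compl.mono (Set.compl_subset_compl.2 Set.sdiff_subset)⟩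
    omega
  · have := hA.min T ⟨f1, hfin, hA.compl.mono (Set.compl_subset_compl.2 hTA)⟩
    omega

lemma exists_isThinCut (h : ∃ A, IsCut S A) : ∃ A, IsThinCut S A := by
  obtain ⟨A, hA, hmin⟩ := WellFounded.has_min
    (measure fun A : Set G => (edgeBoundary S A).ncard).wf {A | IsCut S A} h
  exact ⟨A, hA, fun B hB => not_lt.1 (hmin B hB)⟩

/-- A nonempty chain of thin cuts containing `1` has a least element. -/
lemma exists_forall_subset_of_isChain (hS : Subgroup.closure S = ⊤) (hinv : ∀ s ∈ S, s⁻¹ ∈ S)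
    {c : Set (Set G)} (hc : ∀ A ∈ c, IsThinCut S A ∧ 1 ∈ A) (hchain : IsChain (· ⊆ ·) c)
    (hne : c.Nonempty) : ∃ A ∈ c, ∀ B ∈ c, A ⊆ B := by
  have hfinset : ∀ F : Finset (G × G), (F : Set (G × G)) ⊆ edgeBoundary S (⋂₀ c) →
      ∃ A ∈ c, (F : Set (G × G)) ⊆ edgeBoundary S A := by
    classical
    intro F
    induction F using Finset.induction_on with
    | empty => exact fun _ => ⟨hne.some, hne.some_mem, by simp⟩
    | insert p F _ ih =>
      intro hF
      rw [Finset.coe_insert, Set.insert_subset_iff] at hF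
      obtain ⟨A, hA, hFA⟩ := ih hF.2
      obtain ⟨h1, h2, h3⟩ := hF.1
      obtain ⟨B, hB, hpB⟩ : ∃ B ∈ c, p.1 * p.2 ∉ B := by simpa using h3
      have hsub : ∀ {X Y}, X ∈ c → X ⊆ Y → ∀ q ∈ edgeBoundary S (⋂₀ c), q ∈ edgeBoundary S Y →
          q ∈ edgeBoundary S X := fun hX hXY q hq hqY =>
        ⟨hq.1, hq.2.1 _ hX, fun h => hqY.2.2 (hXY h)⟩
      have hpB' : p ∈ edgeBoundary S B := ⟨h1, h2 _ hB, hpB⟩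
      rw [Finset.coe_insert]
      rcases hchain.total hA hB with hAB | hBA
      · exact ⟨A, hA, Set.insert_subset (hsub hA hAB p hF.1 hpB') hFA⟩
      · exact ⟨B, hB, Set.insert_subset hpB' fun q hq => hsub hB hBA q (hF.2 hq) (hFA hq)⟩
  have hfin : (edgeBoundary S (⋂₀ c)).Finite := by
    by_contra hinf
    obtain ⟨A, hA⟩ := hne
    obtain ⟨F, hF, hcard⟩ := Set.Infinite.exists_subset_card_eq hinf
      ((edgeBoundary S A).ncard + 1)
    obtain ⟨B, hB, hFB⟩ := hfinset F hF
    have := Set.ncard_le_ncard hFB (hc B hB).1.finite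
    rw [Set.ncard_coe_finset, hcard] at this
    have := (hc B hB).1.min A (hc A hA).1.toIsCut
    omega
  obtain ⟨A, hA, hFA⟩ := hfinset hfin.toFinset (by simp)
  refine ⟨A, hA, fun B hB => ?_⟩
  have : ⋂₀ c = A := (hc A hA).1.connected hS hinv (Set.sInter_subset_of_mem hA)
    ⟨1, fun B hB => (hc B hB).2⟩ fun x hx s hs hxs => by
      by_contra h
      exact (hFA (hfin.mem_toFinset.2 (show (x, s) ∈ edgeBoundary S (⋂₀ c) from ⟨hs, hx, h⟩))).2.2 hxs
  rw [← this]
  exact Set.sInter_subset_of_mem hB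

/-- A nontrivial almost invariant set which is almost nested with all its translates. -/
structure IsNestedCut (A : Set G) : Prop where
  almost_inv : ∀ g, {x | x ∈ A ∧ x * g ∉ A}.Finite
  infinite : A.Infinite
  compl : Aᶜ.Infinite
  nested : ∀ g : G, (A ∩ g • A).Finite ∨ (A ∩ (g • A)ᶜ).Finite ∨ (Aᶜ ∩ g • A).Finite ∨
    (Aᶜ ∩ (g • A)ᶜ).Finite
  finite_crossing : {g : G | (A ∩ g • A).Nonempty ∧ (A ∩ (g • A)ᶜ).Nonempty ∧
    (Aᶜ ∩ g • A).Nonempty ∧ (Aᶜ ∩ (g • A)ᶜ).Nonempty}.Finite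

lemma IsCut.almost_inv (hS : Subgroup.closure S = ⊤) (hinv : ∀ s ∈ S, s⁻¹ ∈ S)
    (hA : IsCut S A) (g : G) : {x | x ∈ A ∧ x * g ∉ A}.Finite := by
  have hs : ∀ s ∈ S, {x | x ∈ A ∧ x * s ∉ A}.Finite := fun s hs =>
    (hA.finite.image Prod.fst).subset fun x hx => ⟨(x, s), ⟨hs, hx.1, hx.2⟩, rfl⟩
  have : g ∈ Subgroup.closure S := by simp [hS]
  induction this using Subgroup.closure_induction'' with
  | mem s h => exact hs s h
  | inv_mem s h => exact hs _ (hinv s h)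
  | one => simp
  | mul g h _ _ ihg ihh =>
    refine (ihg.union (ihh.preimage (mul_left_injective g).injOn)).subset ?_
    rintro x ⟨h1, h2⟩
    by_cases hx : x * g ∈ A
    · exact Or.inr ⟨hx, by rwa [mul_assoc]⟩
    · exact Or.inl ⟨h1, hx⟩

lemma IsThinCut.exists_edge (hS : Subgroup.closure S = ⊤) (hinv : ∀ s ∈ S, s⁻¹ ∈ S)
    (hA : IsThinCut S A) (h : (A ∩ B).Nonempty) (h' : (A ∩ Bᶜ).Nonempty) :
    ∃ p ∈ edgeBoundary S B, p.1 ∈ A := by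
  by_contra! hcon
  have := hA.connected hS hinv Set.inter_subset_left h fun x hx s hs hxs => ⟨hxs, by
    by_contra hb
    exact hcon (x, s) ⟨hs, hx.2, hb⟩ hx.1⟩
  obtain ⟨y, hy, hy'⟩ := h'
  rw [← this] at hy
  exact hy' hy.2

theorem exists_isNestedCut (hS : Subgroup.closure S = ⊤) (hinv : ∀ s ∈ S, s⁻¹ ∈ S)
    (h : ∃ A, IsCut S A) : ∃ A : Set G, IsNestedCut A := by
  obtain ⟨A₀, hA₀⟩ := exists_isThinCut h
  obtain ⟨a, ha⟩ := hA₀.infinite.nonempty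
  obtain ⟨A, -, hA⟩ := zorn_superset_nonempty {A | IsThinCut S A ∧ (1 : G) ∈ A}
    (fun c hc hch hne => by
      obtain ⟨A, hA, hAB⟩ := exists_forall_subset_of_isChain hS hinv hc hch hne
      exact ⟨A, hc hA, hAB⟩)
    (a⁻¹ • A₀) ⟨hA₀.smul _, by simpa [Set.mem_smul_set_iff_inv_smul_mem] using ha⟩
  obtain ⟨⟨hthin, h1⟩, hmin⟩ := hA
  have hnest : ∀ B, IsThinCut S B → 1 ∈ B → (A ∩ B).Finite ∨ (A ∩ Bᶜ).Finite ∨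
      (Aᶜ ∩ Bᶜ).Finite := by
    intro B hB h1B
    by_contra! hcon
    have := hmin ⟨hthin.inter hB hcon.1 (by simpa [Set.compl_union] using hcon.2.2), h1, h1B⟩
      Set.inter_subset_left
    have hAB : A ∩ Bᶜ = ∅ := by
      rw [← Set.sdiff_eq, Set.sdiff_eq_empty]
      exact this.trans Set.inter_subset_right
    exact hcon.2.1 (by simp [hAB])
  refine ⟨A, hthin.toIsCut.almost_inv hS hinv, hthin.infinite, hthin.compl, fun g => ?_, ?_⟩
  · by_cases hg : 1 ∈ g • A
    · rcases hnest _ (hthin.smul g) hg with h | h | h <;> simp [h]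
    · rcases hnest _ ((hthin.smul g).compl_isThinCut hinv) hg with h | h | h
      · simp [h]
      · rw [compl_compl] at h; simp [h]
      · rw [compl_compl] at h; simp [h]
  · have hV : (Prod.fst '' edgeBoundary S A).Finite := hthin.finite.image _
    refine ((hV.prod hV).biUnion (t := fun p => {g : G | g * p.1 ∈ A ∧ g * p.2 ∉ A})
      fun p _ => ?_).subset ?_
    · refine ((hthin.toIsCut.almost_inv hS hinv (p.1⁻¹ * p.2)).preimage
        (mul_left_injective p.1).injOn).subset ?_
      rintro g ⟨h2, h3⟩
      exact ⟨h2, by simpa [mul_assoc] using h3⟩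
    · rintro g ⟨h2, h3, h4, h5⟩
      obtain ⟨p, hp, hpA⟩ := hthin.exists_edge hS hinv h2 h3
      obtain ⟨q, hq, hqA⟩ := (hthin.compl_isThinCut hinv).exists_edge hS hinv h4 h5
      rw [edgeBoundary_smul] at hp hq
      obtain ⟨p, hp, rfl⟩ := hp
      obtain ⟨q, hq, rfl⟩ := hq
      simp only [Set.mem_iUnion]
      exact ⟨(p.1, q.1), ⟨⟨p, hp, rfl⟩, ⟨q, hq, rfl⟩⟩, hpA, hqA⟩

end Cuts

section FreeProduct

lemma three_le_mk_of_torsionFree {H : Type*} [Group H] (htf : ∀ h : H, IsOfFinOrder h → h = 1)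
    {h : H} (hh : h ≠ 1) : 3 ≤ Cardinal.mk H := by
  have : Infinite H := Infinite.of_injective _
    (injective_zpow_iff_not_isOfFinOrder.2 fun h' => hh (htf h h'))
  exact (Cardinal.natCast_lt_aleph0 (n := 3)).le.trans (Cardinal.aleph0_le_mk H)

/-- The internal free product decomposition of a group. -/
def IsFreeProduct {G : Type*} [Group G] (H : Bool → Subgroup G) : Prop :=
  Function.Bijective (Monoid.CoprodI.lift fun i => (H i).subtype)

lemma isFreeProduct_of_ping_pong {G E : Type*} [Group G] [MulAction G E]
    (htf : ∀ g : G, IsOfFinOrder g → g = 1) {H : Bool → Subgroup G}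
    (hne : H true ≠ ⊥) (hgen : H true ⊔ H false = ⊤) {X : Bool → Set E}
    (hX : ∀ i, (X i).Nonempty) (hdisj : Disjoint (X true) (X false))
    (hpp : ∀ i, ∀ h ∈ H i, h ≠ 1 → ∀ x ∈ X (!i), h • x ∈ X i) : IsFreeProduct H := by
  constructor
  · refine Monoid.CoprodI.lift_injective_of_ping_pong _ (Or.inr ⟨true, ?_⟩) X hX ?_ ?_
    · obtain ⟨h, h1⟩ := Subgroup.ne_bot_iff_exists_ne_one.1 hne
      refine three_le_mk_of_torsionFree (fun k hk => ?_) h1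
      exact Subtype.ext (htf k (Submonoid.isOfFinOrder_coe.2 hk))
    · rintro (_ | _) (_ | _) hij
      · exact absurd rfl hij
      · exact hdisj.symm
      · exact hdisj
      · exact absurd rfl hij
    · rintro i j hij h hh x hx
      obtain ⟨y, hy, rfl⟩ := hx
      have hj : j = !i := by cases i <;> cases j <;> simp_all
      subst hj
      exact hpp i h h.2 (by simpa using hh) y hy
  · rw [← MonoidHom.range_eq_top, eq_top_iff, ← hgen, sup_le_iff]
    exact ⟨fun x hx => ⟨Monoid.CoprodI.of (i := true) ⟨x, hx⟩, by simp⟩,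
      fun x hx => ⟨Monoid.CoprodI.of (i := false) ⟨x, hx⟩, by simp⟩⟩

end FreeProduct

section TreeOrder

/-- The oriented edges of a tree, ordered by inclusion of the half-trees they point into, together
with an action of `G` that is free and has a single orbit of unoriented edges. -/
structure TreeOrder (G E : Type*) [Group G] [PartialOrder E] [MulAction G E] where
  /-- Reversal of the orientation of an edge. -/
  star : E → E
  /-- The base edge. -/
  base : E
  star_star : ∀ e, star (star e) = e
  star_le_star : ∀ {e f}, e ≤ f → star f ≤ star e
  smul_le_smul : ∀ (g : G) {e f : E}, e ≤ f → g • e ≤ g • f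
  smul_star : ∀ (g : G) e, g • star e = star (g • e)
  not_le_star : ∀ {x e}, x ≤ e → ¬ x ≤ star e
  nested : ∀ e f, e ≤ f ∨ e ≤ star f ∨ star e ≤ f ∨ star e ≤ star f
  finite_Icc : ∀ e f : E, (Set.Icc e f).Finite
  exists_smul : ∀ e, ∃ g : G, e = g • base ∨ e = g • star base
  eq_one_of_smul : ∀ g : G, g • base = base → g = 1
  smul_ne_star : ∀ g : G, g • base ≠ star base
  exists_lt : ∃ x, x < base
  exists_lt_star : ∃ x, x < star base

namespace TreeOrder

variable {G E : Type*} [Group G] [PartialOrder E] [MulAction G E] (T : TreeOrder G E)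

lemma star_le_iff {e f : E} : T.star e ≤ f ↔ T.star f ≤ e :=
  ⟨fun h => by simpa [T.star_star] using T.star_le_star h,
    fun h => by simpa [T.star_star] using T.star_le_star h⟩

lemma le_star_iff {e f : E} : e ≤ T.star f ↔ f ≤ T.star e :=
  ⟨fun h => by simpa [T.star_star] using T.star_le_star h,
    fun h => by simpa [T.star_star] using T.star_le_star h⟩

lemma star_lt_star {e f : E} (h : e < f) : T.star f < T.star e :=
  lt_of_le_not_ge (T.star_le_star h.le) fun h' => h.not_ge
    (by simpa [T.star_star] using T.star_le_star h')

lemma lt_star_comm {e f : E} (h : e < T.star f) : f < T.star e := by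
  simpa [T.star_star] using T.star_lt_star h

lemma star_covBy {e f : E} (h : e ⋖ f) : T.star f ⋖ T.star e := by
  refine ⟨T.star_lt_star h.lt, fun x h1 h2 => h.2 (c := T.star x) ?_ ?_⟩
  · exact T.lt_star_comm h2
  · simpa [T.star_star] using T.star_lt_star h1

lemma smul_lt_smul (T : TreeOrder G E) (g : G) {e f : E} (h : e < f) : g • e < g • f :=
  lt_of_le_of_ne (T.smul_le_smul g h.le) fun h' => h.ne (smul_left_cancel g h')

lemma smul_covBy (T : TreeOrder G E) (g : G) {e f : E} (h : e ⋖ f) : g • e ⋖ g • f :=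
  ⟨T.smul_lt_smul g h.lt, fun x h1 h2 => h.2 (c := g⁻¹ • x)
    (by simpa using T.smul_lt_smul g⁻¹ h1) (by simpa using T.smul_lt_smul g⁻¹ h2)⟩

/-- Two oriented edges emanate from the same vertex. -/
def Adj (e f : E) : Prop := e = f ∨ e ⋖ T.star f

variable {T}

lemma Adj.symm {e f : E} (h : T.Adj e f) : T.Adj f e := by
  rcases h with rfl | h
  · exact Or.inl rfl
  · exact Or.inr (by simpa [T.star_star] using T.star_covBy h)

lemma Adj.smul (g : G) {e f : E} (h : T.Adj e f) : T.Adj (g • e) (g • f) := by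
  rcases h with rfl | h
  · exact Or.inl rfl
  · exact Or.inr (by rw [← T.smul_star]; exact T.smul_covBy g h)

lemma Adj.lt_star {e f : E} (h : T.Adj e f) (hne : e ≠ f) : e < T.star f :=
  (h.resolve_left hne).lt

lemma Adj.trans {e f k : E} (h : T.Adj e f) (h' : T.Adj f k) : T.Adj e k := by
  rcases h with rfl | h
  · exact h'
  rcases h' with rfl | h'
  · exact Or.inr h
  have hkf := T.lt_star_comm h'.lt
  by_cases hek : e = k
  · exact Or.inl hek
  have hff : ¬ f ≤ T.star f := T.not_le_star le_rfl
  have hkf' : ¬ k ≤ f := fun h4 => T.not_le_star h4 hkf.le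
  have hef : ¬ e ≤ f := fun h4 => T.not_le_star h4 h.le
  refine Or.inr ⟨?_, fun x h1 h2 => ?_⟩
  · rcases T.nested e k with h1 | h1 | h1 | h1
    · exact absurd hkf (h.2 (lt_of_le_of_ne h1 hek))
    · refine lt_of_le_of_ne h1 ?_
      rintro rfl
      exact T.not_le_star (T.star_star k ▸ T.le_star_iff.1 h.le) h'.le
    · exact absurd (((T.star_star f).symm.le.trans (T.star_le_iff.1 (h1.trans hkf.le))).trans h.le)
        hff
    · have h2 : k ≤ e := by simpa [T.star_star] using T.star_le_star h1
      have h3 := T.star_covBy h'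
      rw [T.star_star] at h3
      exact absurd h.lt (h3.2 (lt_of_le_of_ne h2 (Ne.symm hek)))
  · rcases T.nested x f with h3 | h3 | h3 | h3
    · exact hef (h1.le.trans h3)
    · rcases h3.eq_or_lt with rfl | h3
      · exact hkf' (by simpa [T.star_star] using T.star_le_star h2.le)
      · exact h.2 h1 h3
    · exact hkf' (by simpa [T.star_star] using T.star_le_star ((T.star_le_iff.1 h3).trans h2.le))
    · have h4 : f ≤ x := by simpa [T.star_star] using T.star_le_star h3
      rcases h4.eq_or_lt with rfl | h4
      · exact hef h1.le
      · exact h'.2 h4 h2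

variable (T)

/-- The stabilizer of the vertex from which the edge `e` emanates. -/
def vertexStab (e : E) : Subgroup G where
  carrier := {g | T.Adj (g • e) e}
  one_mem' := Or.inl (one_smul _ _)
  mul_mem' {g h} hg hh := by
    have := Adj.smul g (show T.Adj (h • e) e from hh)
    rw [smul_smul] at this
    exact this.trans hg
  inv_mem' {g} hg := by
    have := (Adj.smul g⁻¹ (show T.Adj (g • e) e from hg)).symm
    rwa [inv_smul_smul] at this

lemma eq_one_of_smul_star (g : G) (h : g • T.star T.base = T.star T.base) : g = 1 :=
  T.eq_one_of_smul g (by rw [T.smul_star] at h; simpa [T.star_star] using congrArg T.star h)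

/-- If a subgroup contains all the elements that move the base edge, possibly after reversal, to an
edge meeting it, then it is the whole group. -/
lemma eq_top_of_adj {H : Subgroup G} (h1 : T.vertexStab T.base ≤ H)
    (h2 : T.vertexStab (T.star T.base) ≤ H)
    (h3 : ∀ g : G, T.Adj (g • T.base) (T.star T.base) → g ∈ H) : H = ⊤ := by
  let P : E → Prop := fun x => ∃ h ∈ H, x = h • T.base ∨ x = h • T.star T.base
  have hstar : ∀ x, P x → P (T.star x) := by
    rintro x ⟨h, hh, rfl | rfl⟩
    · exact ⟨h, hh, Or.inr (T.smul_star _ _).symm⟩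
    · exact ⟨h, hh, Or.inl (by rw [T.smul_star, T.star_star])⟩
  have hadj : ∀ x y, T.Adj x y → P y → P x := by
    rintro x y hxy ⟨h, hh, hy⟩
    obtain ⟨k, hk⟩ := T.exists_smul (h⁻¹ • x)
    have hx : ∀ {b}, h⁻¹ • x = k • b → x = (h * k) • b := fun e => by
      rw [mul_smul, ← e, smul_inv_smul]
    have hxy' := hxy.smul h⁻¹
    rcases hy with rfl | rfl <;> rcases hk with hk | hk <;> rw [hk, inv_smul_smul] at hxy'
    · exact ⟨h * k, H.mul_mem hh (h1 hxy'), Or.inl (hx hk)⟩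
    · have := (hxy'.smul k⁻¹).symm
      rw [inv_smul_smul] at this
      exact ⟨h * k, H.mul_mem hh (by simpa using h3 _ this), Or.inr (hx hk)⟩
    · exact ⟨h * k, H.mul_mem hh (h3 _ hxy'), Or.inl (hx hk)⟩
    · exact ⟨h * k, H.mul_mem hh (h2 hxy'), Or.inr (hx hk)⟩
  have hcov : ∀ x y, x ⋖ y → (P x ↔ P y) := by
    intro x y hxy
    have hxy' : T.Adj x (T.star y) := Or.inr (by rwa [T.star_star])
    constructor
    · intro h
      have := hstar _ (hadj _ _ hxy'.symm h)
      rwa [T.star_star] at this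
    · exact fun h => hadj _ _ hxy' (hstar _ h)
  let _ : LocallyFiniteOrder E := LocallyFiniteOrder.ofFiniteIcc T.finite_Icc
  have hle : ∀ x y, x ≤ y → (P x ↔ P y) := by
    intro x y hxy
    rw [le_iff_reflTransGen_covBy] at hxy
    induction hxy with
    | refl => rfl
    | tail _ h ih => exact ih.trans (hcov _ _ h)
  have hbase : P T.base := ⟨1, H.one_mem, Or.inl (one_smul _ _).symm⟩
  have hall : ∀ x, P x := by
    intro x
    have hs : P (T.star x) → P x := fun h => by simpa [T.star_star] using hstar _ h
    rcases T.nested x T.base with h | h | h | h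
    · exact (hle _ _ h).2 hbase
    · exact (hle _ _ h).2 (hstar _ hbase)
    · exact hs ((hle _ _ h).2 hbase)
    · exact hs ((hle _ _ h).2 (hstar _ hbase))
  rw [eq_top_iff]
  rintro g -
  obtain ⟨h, hh, hg | hg⟩ := hall (g • T.base)
  · have := T.eq_one_of_smul (h⁻¹ * g) (by rw [mul_smul, hg, inv_smul_smul])
    rwa [inv_mul_eq_one.1 this] at hh
  · exact absurd (show (h⁻¹ * g) • T.base = _ by rw [mul_smul, hg, inv_smul_smul])
      (T.smul_ne_star _)

/-- A torsion-free group acting on a tree as in `TreeOrder` is cyclic or a nontrivial free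
product. -/
theorem exists_isFreeProduct (T : TreeOrder G E) (htf : ∀ g : G, IsOfFinOrder g → g = 1) :
    IsCyclic G ∨ ∃ H : Bool → Subgroup G, (∀ i, H i ≠ ⊥) ∧ IsFreeProduct H := by
  let _ : LocallyFiniteOrder E := LocallyFiniteOrder.ofFiniteIcc T.finite_Icc
  by_cases hs : ∃ s : G, T.Adj (s • T.base) (T.star T.base)
  · obtain ⟨s, hs⟩ := hs
    set a := T.base with ha
    have hlt : s • a < a := by
      have := hs.lt_star (T.smul_ne_star s)
      rwa [T.star_star] at this
    have hgen : T.vertexStab a ⊔ Subgroup.zpowers s = ⊤ := by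
      have key : ∀ g : G, T.Adj (g • T.base) (T.star T.base) →
          g ∈ T.vertexStab a ⊔ Subgroup.zpowers s := by
        intro g hg
        have h1 : s⁻¹ * g ∈ T.vertexStab a := by
          have := (hg.trans hs.symm).smul s⁻¹
          rwa [inv_smul_smul, smul_smul] at this
        rw [← mul_inv_cancel_left s g]
        exact Subgroup.mul_mem _ (Subgroup.mem_sup_right (Subgroup.mem_zpowers s))
          (Subgroup.mem_sup_left h1)
      refine T.eq_top_of_adj le_sup_left (fun g hg => ?_) key
      have h1 : T.Adj ((g * s) • a) (T.star T.base) := by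
        rw [mul_smul]
        exact (hs.smul g).trans hg
      simpa using Subgroup.mul_mem _ (key _ h1)
        (Subgroup.inv_mem _ (Subgroup.mem_sup_right (Subgroup.mem_zpowers s)))
    by_cases hbot : T.vertexStab a = ⊥
    · left
      rw [hbot, bot_sup_eq] at hgen
      exact ⟨s, fun x => (hgen.symm ▸ Subgroup.mem_top x : x ∈ Subgroup.zpowers s)⟩
    right
    set b := s⁻¹ • T.star a with hb
    have hab : T.Adj b a := by
      have := (hs.smul s⁻¹).symm
      rwa [inv_smul_smul] at this
    have hpos : ∀ n : ℕ, s ^ n • a ≤ a := by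
      intro n
      induction n with
      | zero => simp
      | succ n ih => rw [pow_succ', mul_smul]; exact (T.smul_le_smul s ih).trans hlt.le
    have hneg : ∀ n : ℕ, (s⁻¹) ^ n • T.star a ≤ T.star a := by
      intro n
      rw [T.smul_star]
      refine T.star_le_star ?_
      have := T.smul_le_smul (s⁻¹ ^ n) (hpos n)
      rwa [smul_smul, inv_pow, inv_mul_cancel, one_smul, ← inv_pow] at this
    let X : Bool → Set E := fun i => if i then
      {x | ∃ c, T.Adj c a ∧ c ≠ a ∧ c ≠ b ∧ x ≤ c} else {x | x ≤ a ∨ x ≤ b}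
    have hgb : ∀ g : G, g • a ≠ b := fun g h => T.smul_ne_star (s * g) (by
      rw [mul_smul, ← ha, h, hb, smul_inv_smul])
    have hpp1 : ∀ h ∈ T.vertexStab a, h ≠ 1 → ∀ x ∈ X false, h • x ∈ X true := by
      rintro h hh h1 x (hx | hx)
      · exact ⟨h • a, hh, fun h' => h1 (T.eq_one_of_smul h h'), hgb h, T.smul_le_smul h hx⟩
      · refine ⟨h • b, (hab.smul h).trans hh, fun h' => hgb h⁻¹ ?_, fun h' => h1 ?_,
          T.smul_le_smul h hx⟩
        · rw [← h', inv_smul_smul]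
        · have := T.eq_one_of_smul_star (s * h * s⁻¹) (by
            rw [mul_smul, ← ha, ← hb, mul_smul, h', hb, smul_inv_smul])
          simpa using this
    refine ⟨fun i => if i then T.vertexStab a else Subgroup.zpowers s, ?_, ?_⟩
    · rintro (_ | _)
      · intro h
        have : s = 1 := by simpa using h
        simp [this] at hlt
      · exact hbot
    · refine isFreeProduct_of_ping_pong htf (X := X) hbot hgen ?_ ?_ ?_
      · have hf : (X false).Nonempty := ⟨a, Or.inl le_rfl⟩
        rintro (_ | _)
        · exact hf
        · obtain ⟨h, hh, h1⟩ := (Subgroup.bot_or_exists_ne_one _).resolve_left hbot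
          exact ⟨_, hpp1 h hh h1 _ hf.some_mem⟩
      · rw [Set.disjoint_left]
        rintro x ⟨c, hca, hne, hne', hxc⟩ (hx | hx)
        · exact T.not_le_star hx (hxc.trans (hca.lt_star hne).le)
        · exact T.not_le_star hx (hxc.trans ((hca.trans hab.symm).lt_star hne').le)
      · rintro (_ | _) h hh h1 x hx
        · obtain ⟨c, hca, hne, hne', hxc⟩ := hx
          obtain ⟨k, rfl⟩ := Subgroup.mem_zpowers_iff.1 hh
          have c1 : c ≤ T.star a := (hca.lt_star hne).le
          have c2 : c ≤ s⁻¹ • a := by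
            have := ((hca.trans hab.symm).lt_star hne').le
            rwa [hb, T.smul_star, T.star_star] at this
          obtain ⟨n, rfl | rfl⟩ := k.eq_nat_or_neg
          · obtain ⟨m, rfl⟩ : ∃ m, n = m + 1 := Nat.exists_eq_succ_of_ne_zero (by
              rintro rfl; simp at h1)
            left
            refine (T.smul_le_smul _ (hxc.trans c2)).trans ?_
            rw [smul_smul, zpow_natCast, pow_succ, mul_inv_cancel_right]
            exact hpos m
          · obtain ⟨m, rfl⟩ : ∃ m, n = m + 1 := Nat.exists_eq_succ_of_ne_zero (by
              rintro rfl; simp at h1)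
            right
            refine (T.smul_le_smul _ (hxc.trans c1)).trans ?_
            rw [_root_.zpow_neg, zpow_natCast, ← inv_pow, pow_succ', mul_smul, hb]
            exact T.smul_le_smul _ (hneg m)
        · exact hpp1 h hh h1 x hx
  · right
    push Not at hs
    have key : ∀ b, (b = T.base ∨ b = T.star T.base) → (∃ x, x < T.star b) →
        T.vertexStab b ≠ ⊥ := by
      rintro b hb ⟨x, hx⟩ hbot
      obtain ⟨y, -, hy⟩ := exists_le_covBy_of_lt hx
      obtain ⟨g, hg⟩ := T.exists_smul y
      have hy' : T.Adj y b := Or.inr hy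
      have hyb : y ≠ b := by
        rintro rfl
        exact T.not_le_star le_rfl hy.le
      have hmem : ∀ g : G, T.Adj (g • b) b → g = 1 := fun g hg => by
        have : g ∈ T.vertexStab b := hg
        rwa [hbot, Subgroup.mem_bot] at this
      rcases hb with rfl | rfl <;> rcases hg with rfl | rfl
      · exact hyb (by rw [hmem g hy', one_smul])
      · refine hs g⁻¹ ?_
        have := (hy'.smul g⁻¹).symm
        rwa [inv_smul_smul] at this
      · exact hs g hy'
      · exact hyb (by rw [hmem g hy', one_smul])
    refine ⟨fun i => if i then T.vertexStab T.base else T.vertexStab (T.star T.base), ?_, ?_⟩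
    · rintro (_ | _)
      · exact key _ (Or.inr rfl) (by simpa [T.star_star] using T.exists_lt)
      · exact key _ (Or.inl rfl) T.exists_lt_star
    · refine isFreeProduct_of_ping_pong htf
        (X := fun i => if i then {x | x ≤ T.star T.base} else {x | x ≤ T.base}) ?_ ?_ ?_ ?_ ?_
      · exact key _ (Or.inl rfl) T.exists_lt_star
      · exact T.eq_top_of_adj le_sup_left le_sup_right fun g hg => absurd hg (hs g)
      · rintro (_ | _)
        · exact ⟨T.base, le_refl T.base⟩
        · exact ⟨T.star T.base, le_refl (T.star T.base)⟩
      · rw [Set.disjoint_left]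
        exact fun x hx hx' => T.not_le_star hx' hx
      · rintro (_ | _) h hh h1 x hx
        · have hlt := Adj.lt_star (show T.Adj (h • T.star T.base) (T.star T.base) from hh)
            fun h' => h1 (T.eq_one_of_smul_star h h')
          rw [T.star_star] at hlt
          exact (T.smul_le_smul h (show x ≤ T.star T.base from hx)).trans hlt.le
        · have hlt := Adj.lt_star (show T.Adj (h • T.base) T.base from hh)
            fun h' => h1 (T.eq_one_of_smul h h')
          exact (T.smul_le_smul h (show x ≤ T.base from hx)).trans hlt.le

end TreeOrder
end TreeOrder

section Stabilizer

open Filter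

variable {G : Type*} [Group G] {A : Set G} {h : G}

lemma eventually_pow_mul_notMem (hh : ¬ IsOfFinOrder h) {D : Set G} (hD : D.Finite) (x : G) :
    ∀ᶠ k : ℕ in atTop, h ^ k * x ∉ D := by
  have hinj : Function.Injective fun k : ℕ => h ^ k * x := fun k l hkl =>
    injective_pow_iff_not_isOfFinOrder.2 hh (mul_right_cancel hkl)
  have := hinj.tendsto_cofinite.eventually hD.eventually_cofinite_notMem
  rwa [Nat.cofinite_eq_atTop] at this

/-- If `A` is almost invariant under right translations and under left translation by `h`, then
the positive powers of `h` converge to one of the two sides of `A`. -/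
lemma eventually_mem_or_eventually_notMem (hh : ¬ IsOfFinOrder h)
    (hA : ∀ g, {x | x ∈ A ∧ x * g ∉ A}.Finite) (hD : ∀ᶠ y in cofinite, (y ∈ A ↔ h * y ∈ A)) :
    (∀ x, ∀ᶠ k : ℕ in atTop, h ^ k * x ∈ A) ∨ ∀ x, ∀ᶠ k : ℕ in atTop, h ^ k * x ∉ A := by
  obtain ⟨K, hK⟩ := eventually_atTop.1 (eventually_pow_mul_notMem hh hD 1)
  have hconst : ∀ k ≥ K, (h ^ k ∈ A ↔ h ^ K ∈ A) := by
    intro k hk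
    induction k, hk using Nat.le_induction with
    | base => rfl
    | succ k hk ih =>
      have := hK k hk
      simp only [mul_one, Set.mem_compl_iff, Set.mem_ofPred_eq, not_not] at this
      rw [← ih, this, pow_succ']
  by_cases h1 : h ^ K ∈ A
  · refine Or.inl fun x => ?_
    filter_upwards [eventually_ge_atTop K, eventually_pow_mul_notMem hh (hA x) 1] with k hk hk'
    by_contra hx
    exact hk' ⟨by simpa using (hconst k hk).2 h1, by simpa using hx⟩
  · refine Or.inr fun x => ?_
    filter_upwards [eventually_ge_atTop K, eventually_pow_mul_notMem hh (hA x⁻¹) x] with k hk hk'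
    exact fun hx => hk' ⟨hx, by simpa using fun h' => h1 ((hconst k hk).1 h')⟩

lemma exists_pow_mul_of_mem_of_notMem {P : G → Prop} {x : G} (hx : ¬ P x)
    (hev : ∀ᶠ k : ℕ in atTop, P (h ^ k * x)) :
    ∃ k : ℕ, ¬ (P (h ^ k * x) ↔ P (h * (h ^ k * x))) := by
  by_contra! hcon
  obtain ⟨k, hk⟩ := hev.exists
  refine hx ?_
  induction k with
  | zero => simpa using hk
  | succ k ih => exact ih ((hcon k).2 (by rwa [← mul_assoc, ← pow_succ']))

lemma finite_compl_of_eventually_mem (hD : ∀ᶠ y in cofinite, (y ∈ A ↔ h * y ∈ A))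
    (h1 : ∀ x, ∀ᶠ k : ℕ in atTop, h ^ k * x ∈ A)
    (h2 : ∀ x, ∀ᶠ k : ℕ in atTop, h⁻¹ ^ k * x ∈ A) : Aᶜ.Finite := by
  refine (Set.Finite.biUnion (t := fun d => (fun k : ℕ => h⁻¹ ^ k * d) '' {k | h⁻¹ ^ k * d ∉ A})
    hD fun d _ => Set.Finite.image _ ?_).subset ?_
  · have := h2 d
    rwa [← Nat.cofinite_eq_atTop] at this
  · intro y hy
    obtain ⟨k, hk⟩ := exists_pow_mul_of_mem_of_notMem (P := (· ∈ A)) hy (h1 y)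
    simp only [Set.mem_iUnion]
    exact ⟨h ^ k * y, hk, k, by simpa using hy, by simp⟩

lemma finiteIndex_zpowers_of_eventually (hD : ∀ᶠ y in cofinite, (y ∈ A ↔ h * y ∈ A))
    (h1 : ∀ x, ∀ᶠ k : ℕ in atTop, h ^ k * x ∈ A)
    (h2 : ∀ x, ∀ᶠ k : ℕ in atTop, h⁻¹ ^ k * x ∉ A) : (Subgroup.zpowers h).FiniteIndex := by
  have hmeet : ∀ x, ∃ k : ℤ, ¬ (h ^ k * x ∈ A ↔ h * (h ^ k * x) ∈ A) := by
    intro x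
    obtain ⟨l, hl⟩ := (h2 x).exists
    obtain ⟨k, hk⟩ := exists_pow_mul_of_mem_of_notMem (P := (· ∈ A)) hl (h1 _)
    refine ⟨k - l, ?_⟩
    have : h ^ ((k : ℤ) - l) * x = h ^ k * (h⁻¹ ^ l * x) := by
      rw [_root_.zpow_sub, zpow_natCast, zpow_natCast, inv_pow, mul_assoc]
    rwa [this]
  have hsurj : Function.Surjective fun d : ↥({y | (y ∈ A ↔ h * y ∈ A)}ᶜ : Set G) =>
      (((d : G)⁻¹ : G) : G ⧸ Subgroup.zpowers h) := by
    intro q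
    obtain ⟨x, rfl⟩ := QuotientGroup.mk_surjective q
    obtain ⟨k, hk⟩ := hmeet x⁻¹
    refine ⟨⟨_, hk⟩, ?_⟩
    rw [QuotientGroup.eq]
    exact ⟨k, by simp⟩
  have : Finite ({y | (y ∈ A ↔ h * y ∈ A)}ᶜ : Set G) := hD
  have := Finite.of_surjective _ hsurj
  exact Subgroup.finiteIndex_of_finite_quotient

/-- In a torsion-free group that is not virtually cyclic, a nontrivial almost invariant set has
trivial stabilizer up to finite sets. -/
lemma IsNestedCut.eq_one_of_eventually (htf : ∀ g : G, IsOfFinOrder g → g = 1)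
    (hvc : ∀ g : G, ¬ (Subgroup.zpowers g).FiniteIndex) (hA : IsNestedCut A)
    (hD : ∀ᶠ y in cofinite, (y ∈ A ↔ h * y ∈ A)) : h = 1 := by
  by_contra hne
  have hh : ¬ IsOfFinOrder h := fun h' => hne (htf h h')
  have hD' : ∀ᶠ y in cofinite, (y ∈ A ↔ h⁻¹ * y ∈ A) := by
    filter_upwards [(mul_right_injective h⁻¹).tendsto_cofinite.eventually hD] with y hy
    rw [hy, mul_inv_cancel_left]
  rcases eventually_mem_or_eventually_notMem hh hA.almost_inv hD with h1 | h1 <;>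
  rcases eventually_mem_or_eventually_notMem (by simpa using hh) hA.almost_inv hD' with h2 | h2
  · exact hA.compl (finite_compl_of_eventually_mem hD h1 h2)
  · exact hvc h (finiteIndex_zpowers_of_eventually hD h1 h2)
  · exact hvc _ (finiteIndex_zpowers_of_eventually hD' h2 (by simpa using h1))
  · refine hA.infinite ?_
    rw [← compl_compl A]
    exact finite_compl_of_eventually_mem (by simpa [not_iff_not] using hD) h1 h2

end Stabilizer

section HalfSpace

open Filter

/-- A translate of a fixed subset of `G` (if `side` is `true`) or of its complement. -/
@[ext]
structure HalfSpace (G : Type*) where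
  /-- The translating element. -/
  elt : G
  /-- Which of the two sides is meant. -/
  side : Bool

namespace HalfSpace

/-- The complementary half-space. -/
def star {G : Type*} (e : HalfSpace G) : HalfSpace G := ⟨e.elt, !e.side⟩

lemma star_star {G : Type*} (e : HalfSpace G) : e.star.star = e := by
  simp [star]

variable {G : Type*} [Group G]

instance : MulAction G (HalfSpace G) where
  smul g e := ⟨g * e.elt, e.side⟩
  one_smul e := by ext <;> simp [HSMul.hSMul]
  mul_smul g h e := by ext <;> simp [HSMul.hSMul, mul_assoc]

lemma smul_def (g : G) (e : HalfSpace G) : g • e = ⟨g * e.elt, e.side⟩ := rfl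

/-- Membership of an element of `G` in a half-space. -/
def Mem (A : Set G) (e : HalfSpace G) (x : G) : Prop := e.elt⁻¹ * x ∈ A ↔ e.side = true

variable {A : Set G}

lemma mem_star {e : HalfSpace G} {x : G} : Mem A e.star x ↔ ¬ Mem A e x := by
  unfold Mem star
  cases e.side <;> simp

lemma mem_smul {g : G} {e : HalfSpace G} {x : G} : Mem A (g • e) x ↔ Mem A e (g⁻¹ * x) := by
  simp [Mem, smul_def, mul_assoc]

lemma infinite_mem (hA : IsNestedCut A) (e : HalfSpace G) : {x | Mem A e x}.Infinite := by
  intro hfin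
  have h2 := hfin.preimage (mul_right_injective e.elt).injOn
  obtain ⟨g, _ | _⟩ := e
  · exact hA.compl (h2.subset fun x hx => by simpa [Mem] using hx)
  · exact hA.infinite (h2.subset fun x hx => by simpa [Mem] using hx)

lemma finite_separating (hA : IsNestedCut A) (p q : G) :
    {e : HalfSpace G | Mem A e p ∧ ¬ Mem A e q}.Finite := by
  have key : ∀ p q : G, {g : G | g⁻¹ * p ∈ A ∧ g⁻¹ * q ∉ A}.Finite := by
    intro p q
    refine ((hA.almost_inv (p⁻¹ * q)).preimage
      (f := fun g : G => g⁻¹ * p) (fun x _ y _ h => by simpa using h)).subset ?_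
    rintro g ⟨h1, h2⟩
    exact ⟨h1, by simpa [mul_assoc] using h2⟩
  refine (((key p q).image fun g => ⟨g, true⟩).union
    ((key q p).image fun g => ⟨g, false⟩)).subset ?_
  rintro ⟨g, _ | _⟩ ⟨h1, h2⟩
  · exact Or.inr ⟨g, by simpa [Mem, and_comm] using And.intro h1 h2, rfl⟩
  · exact Or.inl ⟨g, by simpa [Mem] using And.intro h1 h2, rfl⟩

lemma exists_eventually_not_mem (hA : IsNestedCut A) (e f : HalfSpace G) :
    (∀ᶠ x in cofinite, ¬ (Mem A e x ∧ Mem A f x)) ∨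
    (∀ᶠ x in cofinite, ¬ (Mem A e x ∧ ¬ Mem A f x)) ∨
    (∀ᶠ x in cofinite, ¬ (¬ Mem A e x ∧ Mem A f x)) ∨
    (∀ᶠ x in cofinite, ¬ (¬ Mem A e x ∧ ¬ Mem A f x)) := by
  have htr : ∀ {B : Set G}, B.Finite → ∀ᶠ x in cofinite, e.elt⁻¹ * x ∉ B :=
    fun h => (mul_right_injective e.elt⁻¹).tendsto_cofinite.eventually
      h.eventually_cofinite_notMem
  have hm : ∀ x, e.elt⁻¹ * x ∈ (e.elt⁻¹ * f.elt) • A ↔ f.elt⁻¹ * x ∈ A := fun x => by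
    simp [Set.mem_smul_set_iff_inv_smul_mem, mul_assoc]
  have := hA.nested (e.elt⁻¹ * f.elt)
  obtain ⟨g, _ | _⟩ := e <;> obtain ⟨h, _ | _⟩ := f <;>
  · simp only [Mem, Bool.false_eq_true, iff_false, iff_true, not_not]
    rcases this with h | h | h | h <;> have h' := htr h <;>
      simp only [Set.mem_inter_iff, Set.mem_compl_iff, hm] at h' <;> tauto

/-- The two half-spaces cross exactly, that is all four corners are nonempty. -/
def Cross (A : Set G) (e f : HalfSpace G) : Prop :=
  (∃ x, Mem A e x ∧ Mem A f x) ∧ (∃ x, Mem A e x ∧ ¬ Mem A f x) ∧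
    (∃ x, ¬ Mem A e x ∧ Mem A f x) ∧ ∃ x, ¬ Mem A e x ∧ ¬ Mem A f x

lemma finite_cross (hA : IsNestedCut A) (e : HalfSpace G) : {f | Cross A e f}.Finite := by
  refine (Set.Finite.image (fun p : G × Bool => (⟨e.elt * p.1, p.2⟩ : HalfSpace G))
    (hA.finite_crossing.prod (Set.finite_univ (α := Bool)))).subset ?_
  rintro f hf
  refine ⟨(e.elt⁻¹ * f.elt, f.side), ⟨?_, trivial⟩, by simp⟩
  have hm : ∀ x, e.elt⁻¹ * x ∈ (e.elt⁻¹ * f.elt) • A ↔ f.elt⁻¹ * x ∈ A := fun x => by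
    simp [Set.mem_smul_set_iff_inv_smul_mem, mul_assoc]
  have ht : ∀ {B : Set G}, (∃ x, e.elt⁻¹ * x ∈ B) → B.Nonempty := fun ⟨x, hx⟩ => ⟨_, hx⟩
  obtain ⟨g, _ | _⟩ := e <;> obtain ⟨h, _ | _⟩ := f <;>
  · simp only [Cross, Mem, Bool.false_eq_true, iff_false, iff_true, not_not, Set.mem_ofPred_eq]
      at hf
    refine ⟨ht ?_, ht ?_, ht ?_, ht ?_⟩ <;>
      simp only [Set.mem_inter_iff, Set.mem_compl_iff, hm] <;> simp [hf]

lemma eq_of_eventually (htf : ∀ g : G, IsOfFinOrder g → g = 1)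
    (hvc : ∀ g : G, ¬ (Subgroup.zpowers g).FiniteIndex) (hA : IsNestedCut A) {e f : HalfSpace G}
    (h : ∀ᶠ x in cofinite, (Mem A e x ↔ Mem A f x)) : e = f := by
  have : Infinite G := hA.infinite.to_subtype.of_injective _ Subtype.val_injective
  have h' := (mul_right_injective e.elt).tendsto_cofinite.eventually h
  simp only [Mem, ← mul_assoc, inv_mul_cancel, one_mul] at h'
  have h2 : ∀ᶠ x in cofinite, (x ∈ A ↔ (f.elt⁻¹ * e.elt) ^ 2 * x ∈ A) := by
    filter_upwards [h', (mul_right_injective (f.elt⁻¹ * e.elt)).tendsto_cofinite.eventually h']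
      with x h1 h2
    rw [pow_two, mul_assoc]
    tauto
  have h3 : f.elt⁻¹ * e.elt = 1 := htf _ (isOfFinOrder_iff_pow_eq_one.2
    ⟨2, two_pos, hA.eq_one_of_eventually htf hvc h2⟩)
  obtain ⟨x, hx⟩ := h'.exists
  simp only [h3, one_mul] at hx
  refine HalfSpace.ext (inv_mul_eq_one.1 h3).symm ?_
  rw [Bool.eq_iff_iff]
  tauto

/-- Almost inclusion of half-spaces. -/
def AlmostLE (A : Set G) (e f : HalfSpace G) : Prop := ∀ᶠ x in cofinite, Mem A e x → Mem A f x

lemma AlmostLE.star {e f : HalfSpace G} (h : AlmostLE A e f) : AlmostLE A f.star e.star :=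
  h.mono fun x hx => by simpa only [mem_star] using mt hx

lemma AlmostLE.not_star (hA : IsNestedCut A) {e f : HalfSpace G} (h : AlmostLE A e f) :
    ¬ AlmostLE A e f.star := fun h' => infinite_mem hA e <| by
  have : ∀ᶠ x in cofinite, ¬ Mem A e x := by
    filter_upwards [h, h'] with x h1 h2 h3
    exact mem_star.1 (h2 h3) (h1 h3)
  simpa using this

lemma AlmostLE.eq_or_subset (htf : ∀ g : G, IsOfFinOrder g → g = 1)
    (hvc : ∀ g : G, ¬ (Subgroup.zpowers g).FiniteIndex) (hA : IsNestedCut A) {e f : HalfSpace G}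
    (h : AlmostLE A e f) (hc : ¬ Cross A e f) : f = e ∨ ∀ x, Mem A e x → Mem A f x := by
  have h1 : ∃ x, Mem A e x ∧ Mem A f x := by
    by_contra! hcon
    exact h.not_star hA (.of_forall fun x hx => mem_star.2 (hcon x hx))
  have h4 : ∃ x, ¬ Mem A e x ∧ ¬ Mem A f x := by
    by_contra! hcon
    refine h.star.not_star hA (.of_forall fun x hx => ?_)
    simp only [mem_star, not_not] at hx ⊢
    by_contra hcon'
    exact hx (hcon x hcon')
  by_cases h2 : ∃ x, Mem A e x ∧ ¬ Mem A f x
  · left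
    have h3 : ¬ ∃ x, ¬ Mem A e x ∧ Mem A f x := fun h3 => hc ⟨h1, h2, h3, h4⟩
    push Not at h3
    refine eq_of_eventually htf hvc hA ?_
    filter_upwards [h] with x hx
    exact ⟨not_imp_not.1 (h3 x), hx⟩
  · push Not at h2
    exact Or.inr h2

/-- Almost inclusion is a partial order on half-spaces. -/
abbrev partialOrder (htf : ∀ g : G, IsOfFinOrder g → g = 1)
    (hvc : ∀ g : G, ¬ (Subgroup.zpowers g).FiniteIndex) (hA : IsNestedCut A) :
    PartialOrder (HalfSpace G) where
  le := AlmostLE A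
  le_refl e := .of_forall fun _ => id
  le_trans e f g h1 h2 := by
    filter_upwards [h1, h2] with x h1 h2 h using h2 (h1 h)
  le_antisymm e f h1 h2 := eq_of_eventually htf hvc hA <| by
    filter_upwards [h1, h2] with x h1 h2 using ⟨h1, h2⟩

lemma finite_mem_and_not_mem_mul (hA : IsNestedCut A) (e : HalfSpace G) (g : G) :
    {x | Mem A e x ∧ ¬ Mem A e (x * g)}.Finite := by
  have key (g : G) : {x | e.elt⁻¹ * x ∈ A ∧ e.elt⁻¹ * x * g ∉ A}.Finite :=
    (hA.almost_inv g).preimage (mul_right_injective e.elt⁻¹).injOn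
  obtain ⟨a, _ | _⟩ := e
  · refine ((key g⁻¹).preimage (f := fun x => x * g) (mul_left_injective g).injOn).subset ?_
    intro x hx
    simpa [Mem, mul_assoc, and_comm] using hx
  · refine (key g).subset fun x hx => ?_
    simpa [Mem, mul_assoc] using hx

lemma exists_almostLE_ne (hA : IsNestedCut A) (e : HalfSpace G) :
    ∃ f, AlmostLE A f e ∧ f ≠ e := by
  obtain ⟨p, hp⟩ := hA.infinite.nonempty
  obtain ⟨q, hq⟩ := hA.compl.nonempty
  have hinf : {g | Mem A e (g * p)}.Infinite := fun hfin => infinite_mem hA e <|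
    (hfin.image fun g => g * p).subset fun x hx => ⟨x * p⁻¹, by simpa using hx, by simp⟩
  have hfin1 : {g | Mem A e (g * p) ∧ ¬ Mem A e (g * q)}.Finite := by
    refine ((finite_mem_and_not_mem_mul hA e (p⁻¹ * q)).preimage (f := fun x => x * p)
      (mul_left_injective p).injOn).subset fun x hx => ?_
    simpa using hx
  have hfin2 : {g : G | Cross A e ⟨g, true⟩}.Finite :=
    (finite_cross hA e).preimage (f := fun g => (⟨g, true⟩ : HalfSpace G))
      fun x _ y _ h => congrArg elt h
  obtain ⟨g, hg1, hg2⟩ := (hinf.sdiff ((hfin1.union hfin2).union (Set.finite_singleton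
    e.elt))).nonempty
  simp only [Set.mem_union, Set.mem_singleton_iff, not_or, Set.mem_ofPred_eq, not_and, not_not]
    at hg1 hg2
  obtain ⟨⟨h1, h2⟩, h3⟩ := hg2
  have hx1 : Mem A ⟨g, true⟩ (g * p) := by simpa [Mem] using hp
  have hx2 : ¬ Mem A ⟨g, true⟩ (g * q) := by simpa [Mem] using hq
  by_cases h4 : ∃ x, ¬ Mem A e x ∧ Mem A ⟨g, true⟩ x
  · have h5 : ¬ ∃ x, ¬ Mem A e x ∧ ¬ Mem A ⟨g, true⟩ x := fun h5 =>
      h2 ⟨⟨_, hg1, hx1⟩, ⟨_, h1 hg1, hx2⟩, h4, h5⟩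
    push Not at h5
    refine ⟨star ⟨g, true⟩, .of_forall fun x hx => ?_, fun h => h3 (congrArg elt h)⟩
    by_contra hcon
    exact mem_star.1 hx (h5 x hcon)
  · push Not at h4
    refine ⟨⟨g, true⟩, .of_forall fun x hx => ?_, fun h => h3 (congrArg elt h)⟩
    by_contra hcon
    exact h4 x hcon hx

lemma finite_between (htf : ∀ g : G, IsOfFinOrder g → g = 1)
    (hvc : ∀ g : G, ¬ (Subgroup.zpowers g).FiniteIndex) (hA : IsNestedCut A)
    (e f : HalfSpace G) : {x | AlmostLE A e x ∧ AlmostLE A x f}.Finite := by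
  obtain ⟨p, hp⟩ := (infinite_mem hA e).nonempty
  obtain ⟨q, hq⟩ := (infinite_mem hA f.star).nonempty
  refine ((((finite_cross hA e).union ((finite_cross hA f.star).image star)).union
    (Set.toFinite {e, f})).union (finite_separating hA p q)).subset ?_
  rintro x ⟨h1, h2⟩
  simp only [Set.mem_union, Set.mem_insert_iff, Set.mem_singleton_iff]
  by_cases hc1 : Cross A e x
  · exact Or.inl (Or.inl (Or.inl hc1))
  by_cases hc2 : Cross A f.star x.star
  · exact Or.inl (Or.inl (Or.inr ⟨_, hc2, star_star x⟩))
  rcases h1.eq_or_subset htf hvc hA hc1 with h3 | h3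
  · exact Or.inl (Or.inr (Or.inl h3))
  rcases h2.star.eq_or_subset htf hvc hA hc2 with h4 | h4
  · exact Or.inl (Or.inr (Or.inr (by rw [← star_star x, h4, star_star])))
  · exact Or.inr ⟨h3 p hp, mem_star.1 (h4 q hq)⟩

end HalfSpace

open HalfSpace in
/-- A nested cut of a torsion-free group that is not virtually cyclic splits the group. -/
theorem IsNestedCut.exists_isFreeProduct {G : Type*} [Group G] {A : Set G}
    (htf : ∀ g : G, IsOfFinOrder g → g = 1)
    (hvc : ∀ g : G, ¬ (Subgroup.zpowers g).FiniteIndex) (hA : IsNestedCut A) :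
    ∃ H : Bool → Subgroup G, (∀ i, H i ≠ ⊥) ∧ IsFreeProduct H := by
  let _ : PartialOrder (HalfSpace G) := HalfSpace.partialOrder htf hvc hA
  have hlt (e : HalfSpace G) : ∃ f, f < e :=
    let ⟨f, h1, h2⟩ := exists_almostLE_ne hA e
    ⟨f, lt_of_le_of_ne h1 h2⟩
  let T : TreeOrder G (HalfSpace G) :=
    { star := star
      base := ⟨1, true⟩
      star_star := star_star
      star_le_star := AlmostLE.star
      smul_le_smul := fun g e f h => by
        filter_upwards [(mul_right_injective g⁻¹).tendsto_cofinite.eventually h] with x hx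
        simpa only [HalfSpace.mem_smul] using hx
      smul_star := fun g e => rfl
      not_le_star := AlmostLE.not_star hA
      nested := fun e f => by
        have key {e f : HalfSpace G} (h : ∀ᶠ x in cofinite, ¬ (Mem A e x ∧ ¬ Mem A f x)) :
            AlmostLE A e f := h.mono fun x hx => by simpa using hx
        rcases exists_eventually_not_mem hA e f with h | h | h | h
        · exact Or.inr (Or.inl (key (by simpa only [mem_star, not_not] using h)))
        · exact Or.inl (key h)
        · exact Or.inr (Or.inr (Or.inr (key (by simpa only [mem_star, not_not] using h))))
        · exact Or.inr (Or.inr (Or.inl (key (by simpa only [mem_star, not_not] using h))))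
      finite_Icc := finite_between htf hvc hA
      exists_smul := by
        rintro ⟨g, _ | _⟩
        · exact ⟨g, Or.inr (by simp [smul_def, HalfSpace.star])⟩
        · exact ⟨g, Or.inl (by simp [smul_def])⟩
      eq_one_of_smul := fun g hg => by simpa [smul_def] using congrArg elt hg
      smul_ne_star := fun g hg => by simpa [smul_def, HalfSpace.star] using congrArg side hg
      exists_lt := hlt _
      exists_lt_star := hlt _ }
  refine (T.exists_isFreeProduct htf).resolve_left fun ⟨g, hg⟩ => hvc g ?_
  rw [(Subgroup.eq_top_iff' (Subgroup.zpowers g)).2 fun x => hg x]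
  infer_instance

end HalfSpace

section FreeGroupCut

open FreeGroup

variable {α : Type*} [DecidableEq α]

lemma toWord_letter_mul (c : α × Bool) (w : FreeGroup α) :
    (FreeGroup.mk [c] * w).toWord = c :: w.toWord ∨
      w.toWord = (c.1, !c.2) :: (FreeGroup.mk [c] * w).toWord := by
  have h : (FreeGroup.mk [c] * w).toWord = reduce (c :: w.toWord) := by
    rw [toWord_mul, toWord_mk, reduce_singleton]
    rfl
  rw [reduce.cons, reduce_toWord] at h
  rw [h]
  cases hw : w.toWord with
  | nil => simp
  | cons d L =>
    simp only
    split_ifs with hcd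
    · right
      obtain ⟨a, b⟩ := d
      simp only at hcd
      simp [hcd.1, hcd.2]
    · exact Or.inl rfl

/-- The set of elements with a given last letter is almost invariant under left translations. -/
lemma finite_getLast (c : α × Bool) (u : FreeGroup α) :
    {w : FreeGroup α | w.toWord.getLast? = some c ∧
      (u * w).toWord.getLast? ≠ some c}.Finite := by
  have hletter : ∀ d : α × Bool, {w : FreeGroup α | w.toWord.getLast? = some c ∧
      (FreeGroup.mk [d] * w).toWord.getLast? ≠ some c}.Finite := by
    intro d
    refine (Set.finite_singleton (FreeGroup.mk [c])).subset ?_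
    rintro w ⟨h1, h2⟩
    rcases toWord_letter_mul d w with h | h
    · rw [h] at h2
      cases hw : w.toWord with
      | nil => simp [hw] at h1
      | cons e L => simp_all
    · rw [h] at h1
      cases hw : (FreeGroup.mk [d] * w).toWord with
      | nil =>
        rw [hw] at h h1
        have hc : (d.1, !d.2) = c := by simpa using h1
        rw [Set.mem_singleton_iff, ← mk_toWord (x := w), h, hc]
      | cons e L => simp_all
  induction u using FreeGroup.induction_on with
  | C1 => simp
  | of y => exact hletter (y, true)
  | inv_of y _ => exact hletter (y, false)
  | mul u v hu hv =>
    refine (hv.union (hu.preimage (mul_right_injective v).injOn)).subset ?_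
    rintro w ⟨h1, h2⟩
    by_cases h3 : (v * w).toWord.getLast? = some c
    · exact Or.inr ⟨h3, by rwa [← mul_assoc]⟩
    · exact Or.inl ⟨h1, h3⟩

lemma injective_of_pow (x : α) : Function.Injective fun k : ℕ => (of x ^ (k + 1))⁻¹ := by
  intro k l h
  have := congrArg FreeGroup.norm (inv_injective h)
  simpa [norm_of_pow] using this

variable {G Q : Type*} [Group G] [Group Q]

/-- A group with a free normal subgroup of rank at least two and finite quotient has a cut. -/
lemma exists_isCut [Finite Q] (π : G →* Q) {ι : Type*} (b : FreeGroupBasis ι π.ker) {x y : ι}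
    (hxy : x ≠ y) {S : Set G} (hS : S.Finite) : ∃ A, IsCut S A := by
  classical
  let A₁ : Set π.ker := {r | (b.repr r)⁻¹.toWord.getLast? = some (x, true)}
  have hA₁ : ∀ u, {r | r ∈ A₁ ∧ r * u ∉ A₁}.Finite := by
    intro u
    refine ((finite_getLast (x, true) (b.repr u)⁻¹).preimage (f := fun r => (b.repr r)⁻¹)
      (inv_injective.comp b.repr.injective).injOn).subset ?_
    rintro r ⟨h1, h2⟩
    refine ⟨h1, ?_⟩
    simpa [A₁, -toWord_inv] using h2
  have hinf : A₁.Infinite := by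
    refine Set.infinite_of_injective_forall_mem (f := fun k : ℕ => b.repr.symm (of x ^ (k + 1))⁻¹)
      (b.repr.symm.injective.comp (injective_of_pow x)) fun k => ?_
    simp only [Set.mem_ofPred_eq, MulEquiv.apply_symm_apply, inv_inv, toWord_of_pow, A₁]
    simp [List.getLast?_replicate]
  have hinf' : A₁ᶜ.Infinite := by
    refine Set.infinite_of_injective_forall_mem (f := fun k : ℕ => b.repr.symm (of y ^ (k + 1))⁻¹)
      (b.repr.symm.injective.comp (injective_of_pow y)) fun k => ?_
    simp only [Set.mem_ofPred_eq, MulEquiv.apply_symm_apply, inv_inv, toWord_of_pow, A₁,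
      Set.mem_compl_iff]
    simp [List.getLast?_replicate, hxy.symm]
  let τ : Q → G := Function.invFun π
  have hτ : ∀ g, π (τ (π g)) = π g := fun g => Function.invFun_eq ⟨g, rfl⟩
  let toK : G → π.ker := fun g => ⟨g * (τ (π g))⁻¹, by simp [MonoidHom.mem_ker, hτ]⟩
  have htoK : ∀ r : π.ker, toK (r * τ 1) = r := by
    intro r
    have h1 : π (r * τ 1) = 1 := by
      rw [_root_.map_mul, r.2, one_mul]
      simpa using hτ 1
    exact Subtype.ext (by simp [toK, h1])
  have hinj : Function.Injective fun r : π.ker => (r : G) * τ 1 := fun r s h =>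
    Subtype.ext (mul_right_cancel h)
  refine ⟨toK ⁻¹' A₁, ⟨?_, ?_, ?_⟩⟩
  · have hfin : ((Set.univ : Set Q) ×ˢ S).Finite := Set.finite_univ.prod hS
    have hpiece : ∀ z : Q × G, {p : G × G | π p.1 = z.1 ∧ p.2 = z.2 ∧ toK p.1 ∈ A₁ ∧
        toK (p.1 * p.2) ∉ A₁}.Finite := by
      rintro ⟨q, s⟩
      by_cases hq : ∃ g₀, π g₀ = q
      · obtain ⟨g₀, rfl⟩ := hq
        refine ((hA₁ ((toK g₀)⁻¹ * toK (g₀ * s))).image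
          fun r : π.ker => ((r : G) * τ (π g₀), s)).subset ?_
        rintro ⟨g, s'⟩ ⟨h1, h2, h3, h4⟩
        simp only at h1 h2 h3 h4
        subst h2
        refine ⟨toK g, ⟨h3, ?_⟩, by simp [toK, h1]⟩
        have h5 : toK g * ((toK g₀)⁻¹ * toK (g₀ * s')) = toK (g * s') :=
          Subtype.ext (by simp [toK, h1, mul_assoc])
        rwa [h5]
      · refine Set.Finite.subset Set.finite_empty ?_
        rintro p ⟨h1, -⟩
        exact hq ⟨_, h1⟩
    refine (hfin.biUnion fun z _ => hpiece z).subset ?_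
    rintro ⟨g, s⟩ ⟨h1, h2, h3⟩
    exact Set.mem_biUnion (x := (π g, s)) ⟨trivial, h1⟩ ⟨rfl, rfl, h2, h3⟩
  · refine (hinf.image hinj.injOn).mono ?_
    rintro - ⟨r, hr, rfl⟩
    simpa [htoK] using hr
  · refine (hinf'.image hinj.injOn).mono ?_
    rintro - ⟨r, hr, rfl⟩
    simpa [htoK] using hr

lemma not_finiteIndex_zpowers {F : Subgroup G} {ι : Type*} (b : FreeGroupBasis ι F) {x y : ι}
    (hxy : x ≠ y) (g : G) : ¬ (Subgroup.zpowers g).FiniteIndex := by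
  classical
  intro hfin
  have key : ∀ z : ι, ∃ m : ℕ, 0 < m ∧ ∃ i : ℤ, g ^ i = ((b z : F) : G) ^ m := by
    intro z
    obtain ⟨m, hm, -, h⟩ := Subgroup.exists_pow_mem_of_index_ne_zero hfin.index_ne_zero
      ((b z : F) : G)
    exact ⟨m, hm, h⟩
  obtain ⟨m, hm, i, hi⟩ := key x
  obtain ⟨k, hk, j, hj⟩ := key y
  have h1 : b x ^ (m * j) = b y ^ (k * i) := by
    refine Subtype.ext ?_
    push_cast
    rw [_root_.zpow_mul, _root_.zpow_mul, zpow_natCast, zpow_natCast, ← hi, ← hj, ← _root_.zpow_mul, ← _root_.zpow_mul,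
      mul_comm]
  have h3 := congrArg (b.lift (fun w => Multiplicative.ofAdd (if w = x then (1 : ℤ) else 0))) h1
  simp only [map_zpow, FreeGroupBasis.lift_apply_apply] at h3
  have hj0 : j = 0 := by simpa [hm.ne', hxy.symm] using h3
  rw [hj0, zpow_zero] at hj
  have h5 : b y ^ k = 1 := Subtype.ext (by simpa using hj.symm)
  have h6 := congrArg (b.lift (fun w => Multiplicative.ofAdd (if w = y then (1 : ℤ) else 0))) h5
  simp only [map_pow, FreeGroupBasis.lift_apply_apply, _root_.map_one] at h6
  simp at h6
  omega

end FreeGroupCut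

section IsFreeGroup

lemma isFreeGroup_of_isCyclic {G : Type*} [Group G] [hG : IsCyclic G]
    (htf : ∀ g : G, IsOfFinOrder g → g = 1) : IsFreeGroup G := by
  obtain ⟨g, hg⟩ := hG
  by_cases h1 : g = 1
  · have hall : ∀ x : G, x = 1 := fun x => by
      obtain ⟨k, rfl⟩ := hg x
      simp [h1]
    refine (FreeGroupBasis.ofRepr (ι := Empty) (MonoidHom.toMulEquiv 1 1 ?_ ?_)).isFreeGroup
    · ext x
      simp [hall x]
    · ext x
      exact x.elim
  · refine (FreeGroupBasis.ofRepr (ι := Unit) (MulEquiv.ofBijective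
      (FreeGroup.lift fun _ => g) ⟨?_, ?_⟩).symm).isFreeGroup
    · rw [injective_iff_map_eq_one]
      intro w hw
      obtain ⟨k, rfl⟩ : ∃ k : ℤ, FreeGroup.of () ^ k = w :=
        ⟨_, FreeGroup.freeGroupUnitEquivInt.left_inv w⟩
      rw [map_zpow, FreeGroup.lift_apply_of] at hw
      have hk : k = 0 := by
        by_contra hk
        exact h1 (htf g (isOfFinOrder_iff_zpow_eq_one.2 ⟨k, hk, hw⟩))
      simp [hk]
    · intro x
      obtain ⟨k, rfl⟩ := hg x
      exact ⟨FreeGroup.of () ^ k, by simp⟩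

/-- A torsion-free group with a cyclic subgroup of index at most two is cyclic. -/
lemma isCyclic_of_ker {G : Type*} [Group G] (htf : ∀ g : G, IsOfFinOrder g → g = 1)
    (π : G →* ℤˣ) (hπ : IsCyclic π.ker) : IsCyclic G := by
  obtain ⟨⟨z, hz⟩, hgen⟩ := hπ
  replace hgen : ∀ g, π g = 1 → ∃ k : ℤ, z ^ k = g := fun g hg => by
    obtain ⟨k, hk⟩ := hgen ⟨g, hg⟩
    exact ⟨k, by simpa using congrArg Subtype.val hk⟩
  by_cases htriv : ∀ g, π g = 1
  · exact ⟨z, fun g => hgen g (htriv g)⟩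
  push Not at htriv
  obtain ⟨t, ht⟩ := htriv
  have ht' : π t = -1 := (Int.units_eq_one_or _).resolve_left ht
  have htt : ∀ u : G, u ^ 2 = 1 → u = 1 := fun u hu => htf u
    (isOfFinOrder_iff_pow_eq_one.2 ⟨2, two_pos, hu⟩)
  obtain ⟨k, hk⟩ := hgen (t ^ 2) (by simp [ht'])
  obtain ⟨m, hm⟩ := hgen (t * z * t⁻¹) (by simpa [ht'] using hz)
  have hz1 : ∀ i : ℤ, i ≠ 0 → z ^ i = 1 → z = 1 := fun i hi h =>
    htf z (isOfFinOrder_iff_zpow_eq_one.2 ⟨i, hi, h⟩)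
  have hzne : z ≠ 1 := by
    rintro rfl
    exact ht (by rw [htt t (by simpa using hk.symm), map_one])
  have hk0 : k ≠ 0 := by
    rintro rfl
    exact ht (by rw [htt t (by simpa using hk.symm), map_one])
  have hm1 : m = 1 := by
    have h1 : z ^ (m * k) = z ^ k := by
      rw [_root_.zpow_mul, hm, conj_zpow, hk]
      group
    by_contra hne
    refine hzne (hz1 (m * k - k) ?_ (by rw [_root_.zpow_sub, h1, mul_inv_cancel]))
    have : m * k - k = (m - 1) * k := by ring
    rw [this]
    exact mul_ne_zero (sub_ne_zero.2 hne) hk0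
  have hcomm : Commute t z := by
    rw [hm1, zpow_one] at hm
    exact (mul_inv_eq_iff_eq_mul.1 hm.symm)
  have hsq : ∀ j : ℤ, (t * z ^ (-j)) ^ 2 = z ^ (k - 2 * j) := fun j => by
    rw [(hcomm.zpow_right _).mul_pow, ← hk, ← zpow_natCast, ← _root_.zpow_mul, ← _root_.zpow_add]
    congr 1
    push_cast
    ring
  rcases Int.even_or_odd' k with ⟨j, hj | hj⟩
  · have h1 := htt (t * z ^ (-j)) (by rw [hsq j, hj, sub_self, zpow_zero])
    exact absurd (congrArg π h1) (by simp [ht', (MonoidHom.mem_ker).1 hz])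
  · refine ⟨t * z ^ (-j), fun g => ?_⟩
    have hzs : z = (t * z ^ (-j)) ^ (2 : ℤ) := by
      rw [show (2 : ℤ) = ((2 : ℕ) : ℤ) from rfl, zpow_natCast, hsq j, hj]
      simp
    have hz' : ∀ i : ℤ, z ^ i ∈ Subgroup.zpowers (t * z ^ (-j)) := fun i =>
      zpow_mem (Subgroup.mem_zpowers_iff.2 ⟨2, hzs.symm⟩) i
    have ht'' : t ∈ Subgroup.zpowers (t * z ^ (-j)) := by
      have := mul_mem (Subgroup.mem_zpowers (t * z ^ (-j))) (hz' j)
      simpa [mul_assoc] using this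
    change g ∈ Subgroup.zpowers _
    rcases Int.units_eq_one_or (π g) with hg | hg
    · obtain ⟨i, rfl⟩ := hgen g hg
      exact hz' i
    · obtain ⟨i, hi⟩ := hgen (g * t⁻¹) (by simp [hg, ht'])
      rw [← inv_mul_cancel_right g t, ← hi]
      exact mul_mem (hz' i) ht''

lemma finite_monoidHom_of_fg {G H : Type*} [Group G] [Group.FG G] [Group H] [Finite H] :
    Finite (G →* H) := by
  obtain ⟨S, hS⟩ := Group.FG.out (G := G)
  refine Finite.of_injective (fun (φ : G →* H) (s : S) => φ s) fun φ ψ h => ?_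
  refine MonoidHom.eq_of_eqOn_dense (s := (S : Set G)) hS fun s hs => congrFun h ⟨s, hs⟩

lemma nontrivial_monoidHom_of_isFreeGroup {G : Type*} [Group G] [IsFreeGroup G] [Nontrivial G] :
    Nontrivial (G →* ℤˣ) := by
  by_cases hne : Nonempty (IsFreeGroup.Generators G)
  · have : Nontrivial ℤˣ := ⟨1, -1, by decide⟩
    exact (IsFreeGroup.lift (G := G) (H := ℤˣ)).symm.nontrivial
  · rw [not_nonempty_iff] at hne
    obtain ⟨x, hx⟩ := exists_ne (1 : G)
    refine absurd ?_ hx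
    exact (IsFreeGroup.toFreeGroup G).injective (Subsingleton.elim _ _)

universe u

/-- A finitely generated torsion-free group with a free subgroup of index at most two is free. -/
theorem isFreeGroup_of_ker {G : Type u} [Group G] [Group.FG G]
    (htf : ∀ g : G, IsOfFinOrder g → g = 1) (π : G →* ℤˣ) [IsFreeGroup π.ker] :
    IsFreeGroup G := by
  induction hN : Nat.card (G →* ℤˣ) using Nat.strong_induction_on generalizing G with
  | _ N ih =>
    by_cases hgen : Subsingleton (IsFreeGroup.Generators π.ker)
    · have hcyc : IsCyclic π.ker := by
        rw [(IsFreeGroup.toFreeGroup π.ker).isCyclic]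
        rcases isEmpty_or_nonempty (IsFreeGroup.Generators π.ker) with h | ⟨⟨x⟩⟩
        · infer_instance
        · refine ⟨FreeGroup.of x, fun w => ?_⟩
          change w ∈ Subgroup.zpowers _
          induction w using FreeGroup.induction_on with
          | C1 => exact one_mem _
          | of y => rw [Subsingleton.elim y x]; exact Subgroup.mem_zpowers _
          | inv_of y h => exact inv_mem h
          | mul u v hu hv => exact mul_mem hu hv
      have := isCyclic_of_ker htf π hcyc
      exact isFreeGroup_of_isCyclic htf
    · rw [not_subsingleton_iff_nontrivial] at hgen
      obtain ⟨x, y, hxy⟩ := hgen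
      obtain ⟨S, hS⟩ := Group.FG.out (G := G)
      have hS' : Subgroup.closure ((S : Set G) ∪ (S : Set G)⁻¹) = ⊤ := by
        rw [Subgroup.closure_union, Subgroup.closure_inv, hS, sup_idem]
      obtain ⟨A, hA⟩ := exists_isNestedCut hS' (by
        rintro s (hs | hs)
        · exact Or.inr (by simpa using hs)
        · exact Or.inl (by simpa using hs)) (exists_isCut π (IsFreeGroup.basis π.ker) hxy
          (S.finite_toSet.union S.finite_toSet.inv))
      obtain ⟨H, hne, hH⟩ := hA.exists_isFreeProduct htf
        (not_finiteIndex_zpowers (IsFreeGroup.basis π.ker) hxy)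
      let e := MulEquiv.ofBijective _ hH
      have hfg : ∀ i, Group.FG (H i) := fun i => by
        let r : Monoid.CoprodI (fun i => H i) →* H i :=
          Monoid.CoprodI.lift (fun j => if h : j = i then
            (MulEquiv.subgroupCongr (congrArg H h)).toMonoidHom else 1)
        refine Group.fg_of_surjective (f := r.comp e.symm.toMonoidHom) fun h => ?_
        refine ⟨e (Monoid.CoprodI.of h), ?_⟩
        simp only [MonoidHom.coe_comp, Function.comp_apply, MulEquiv.coe_toMonoidHom,
          MulEquiv.symm_apply_apply, r, Monoid.CoprodI.lift_of, dite_true]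
        rfl
      have hfree : ∀ i, IsFreeGroup ((π.comp (H i).subtype).ker) := fun i => by
        let φ : (π.comp (H i).subtype).ker →* π.ker :=
          { toFun := fun x => ⟨x.1, x.2⟩
            map_one' := rfl
            map_mul' := fun _ _ => rfl }
        have hφ : Function.Injective φ := fun x y h =>
          Subtype.ext (Subtype.ext (congrArg (fun z : π.ker => (z : G)) h))
        have := subgroupIsFreeOfIsFree φ.range
        exact IsFreeGroup.ofMulEquiv (MonoidHom.ofInjective hφ).symm
      have hfin : ∀ i, Finite (H i →* ℤˣ) := fun i => finite_monoidHom_of_fg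
      have htwo : ∀ i, 1 < Nat.card (H i →* ℤˣ) := fun i => by
        rw [Finite.one_lt_card_iff_nontrivial]
        have : Nontrivial (H i) := (Subgroup.nontrivial_iff_ne_bot _).2 (hne i)
        by_cases hπ : π.comp (H i).subtype = 1
        · have : IsFreeGroup (H i) := by
            have hker : (π.comp (H i).subtype).ker = ⊤ := by rw [hπ, MonoidHom.ker_one]
            exact IsFreeGroup.ofMulEquiv ((MulEquiv.subgroupCongr hker).trans
              (Subgroup.topEquiv (G := H i)))
          exact nontrivial_monoidHom_of_isFreeGroup
        · exact ⟨_, _, hπ⟩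
      have hcard : N = Nat.card (H true →* ℤˣ) * Nat.card (H false →* ℤˣ) := by
        rw [← hN, Nat.card_congr (e.monoidHomCongrLeftEquiv.symm.trans
          (Monoid.CoprodI.lift (M := fun i => H i) (N := ℤˣ)).symm), Nat.card_pi]
        simp
      have hfreeH : ∀ i, IsFreeGroup (H i) := fun i => by
        refine ih _ ?_ (fun g hg => Subtype.ext (htf g ((H i).subtype.isOfFinOrder hg)))
          (π.comp (H i).subtype) rfl
        rw [hcard]
        have h1 := htwo true
        have h2 := htwo false
        cases i
        · exact lt_mul_of_one_lt_left (by omega) h1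
        · exact lt_mul_of_one_lt_right (by omega) h2
      exact IsFreeGroup.ofMulEquiv e

end IsFreeGroup

section Center

open FreeGroup

/-- A nonabelian free group has trivial center. -/
lemma conj_injective_freeGroup {α : Type*} [Nontrivial α] :
    Function.Injective (MulAut.conj (G := FreeGroup α)) := by
  classical
  rw [injective_iff_map_eq_one]
  intro a ha
  by_contra hne
  cases hw : a.toWord with
  | nil => exact hne (toWord_eq_nil_iff.1 hw)
  | cons c L =>
    obtain ⟨y, hy⟩ := exists_ne c.1
    have hcomm : a * of y = of y * a := by
      have := congrArg (fun φ : MulAut (FreeGroup α) => φ (of y)) ha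
      exact mul_inv_eq_iff_eq_mul.1 (by simpa using this)
    have h1 : (of y * a).toWord = (y, true) :: a.toWord := by
      rcases toWord_letter_mul (y, true) a with h | h
      · exact h
      · rw [hw] at h
        exact absurd (congrArg Prod.fst (List.cons.inj h).1).symm hy
    have h2 := (toWord_mul_sublist a (of y)).eq_of_length (by rw [hcomm, h1]; simp)
    rw [hcomm, h1, hw] at h2
    exact hy (congrArg Prod.fst (List.cons.inj h2).1)

end Center

section IndexTwo

open FreeGroup

variable {κ : Type*}

/-- The free generators of the index two subgroup of the free group on `Option κ` consisting of the
elements of even exponent in `none`. -/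
def evenGen : Option (κ ⊕ κ) → FreeGroup (Option κ)
  | none => of none ^ 2
  | some (Sum.inl i) => of (some i)
  | some (Sum.inr i) => of none * of (some i) * (of none)⁻¹

/-- The action of the free group on `Option κ` on the cosets of the even subgroup, in coordinates
given by the generators `evenGen`. -/
def evenAction : FreeGroup (Option κ) →*
    Equiv.Perm (FreeGroup (Option (κ ⊕ κ)) × Bool) :=
  FreeGroup.lift fun
    | none =>
      { toFun := fun x => if x.2 then (x.1, false) else (of none * x.1, true)
        invFun := fun x => if x.2 then ((of none)⁻¹ * x.1, false) else (x.1, true)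
        left_inv := by rintro ⟨p, _ | _⟩ <;> simp
        right_inv := by rintro ⟨p, _ | _⟩ <;> simp }
    | some i =>
      { toFun := fun x =>
          if x.2 then (of (some (Sum.inr i)) * x.1, true) else (of (some (Sum.inl i)) * x.1, false)
        invFun := fun x => if x.2 then ((of (some (Sum.inr i)))⁻¹ * x.1, true) else
          ((of (some (Sum.inl i)))⁻¹ * x.1, false)
        left_inv := by rintro ⟨p, _ | _⟩ <;> simp
        right_inv := by rintro ⟨p, _ | _⟩ <;> simp }

lemma evenAction_of_none (x : FreeGroup (Option (κ ⊕ κ)) × Bool) :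
    evenAction (of none) x = if x.2 then (x.1, false) else (of none * x.1, true) := by
  rw [evenAction, lift_apply_of]; rfl

lemma evenAction_of_none_inv (p : FreeGroup (Option (κ ⊕ κ))) :
    (evenAction (of none)).symm (p, false) = (p, true) := by
  rw [evenAction, lift_apply_of]; rfl

lemma evenAction_of_some (i : κ) (x : FreeGroup (Option (κ ⊕ κ)) × Bool) :
    evenAction (of (some i)) x = if x.2 then (of (some (Sum.inr i)) * x.1, true)
      else (of (some (Sum.inl i)) * x.1, false) := by
  rw [evenAction, lift_apply_of]; rfl

lemma evenAction_lift (w p : FreeGroup (Option (κ ⊕ κ))) :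
    evenAction (FreeGroup.lift evenGen w) (p, false) = (w * p, false) := by
  induction w using FreeGroup.induction_on generalizing p with
  | C1 => simp
  | of y =>
    rcases y with _ | (i | i)
    · simp [evenGen, pow_two, evenAction_of_none]
    · simp [evenGen, evenAction_of_some]
    · simp [evenGen, evenAction_of_some, evenAction_of_none, evenAction_of_none_inv]
  | inv_of y h =>
    rw [_root_.map_inv, _root_.map_inv, Equiv.Perm.inv_eq_iff_eq, h]
    simp
  | mul u v hu hv => rw [_root_.map_mul, _root_.map_mul, Equiv.Perm.mul_apply, hv, hu, mul_assoc]

lemma lift_evenGen_injective :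
    Function.Injective (FreeGroup.lift (evenGen (κ := κ))) := by
  intro u v h
  have h1 := evenAction_lift u 1
  rw [h, evenAction_lift v 1] at h1
  simpa using (congrArg Prod.fst h1).symm

/-- The element of the free group on `Option κ` with given coordinates. -/
def evenCoord (x : FreeGroup (Option (κ ⊕ κ)) × Bool) : FreeGroup (Option κ) :=
  (if x.2 then (of none)⁻¹ else 1) * FreeGroup.lift evenGen x.1

lemma evenCoord_evenAction (g : FreeGroup (Option κ)) (x : FreeGroup (Option (κ ⊕ κ)) × Bool) :
    evenCoord (evenAction g x) = g * evenCoord x := by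
  induction g using FreeGroup.induction_on generalizing x with
  | C1 => simp
  | of y =>
    obtain ⟨p, _ | _⟩ := x <;> rcases y with _ | i
    · simp [evenCoord, evenAction_of_none, evenGen, pow_two, mul_assoc]
    · simp [evenCoord, evenAction_of_some, evenGen]
    · simp [evenCoord, evenAction_of_none]
    · simp [evenCoord, evenAction_of_some, evenGen, mul_assoc]
  | inv_of y h =>
    obtain ⟨x, rfl⟩ := (evenAction (of y)).surjective x
    simp [h]
  | mul u v hu hv => rw [_root_.map_mul, Equiv.Perm.mul_apply, hu, hv, mul_assoc]

lemma range_lift_evenGen (π : FreeGroup (Option κ) →* ℤˣ) (h0 : π (of none) = -1)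
    (h1 : ∀ i, π (of (some i)) = 1) : (FreeGroup.lift (evenGen (κ := κ))).range = π.ker := by
  have hle : (FreeGroup.lift (evenGen (κ := κ))).range ≤ π.ker := by
    rw [FreeGroup.range_lift_eq_closure, Subgroup.closure_le]
    rintro - ⟨_ | (i | i), rfl⟩ <;> simp [evenGen, MonoidHom.mem_ker, h0, h1]
  refine le_antisymm hle fun g hg => ?_
  have h2 := evenCoord_evenAction g (1, false)
  generalize evenAction g (1, false) = y at h2
  obtain ⟨q, d⟩ := y
  simp only [evenCoord, _root_.map_one, mul_one, Bool.false_eq_true, if_false] at h2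
  have h3 : π (FreeGroup.lift evenGen q) = 1 := hle ⟨q, rfl⟩
  cases d
  · exact ⟨q, by simpa using h2⟩
  · have := congrArg π h2
    rw [MonoidHom.mem_ker.1 hg, _root_.map_mul, h3] at this
    simp [h0] at this

/-- A basis adapted to a surjection onto the group of order two. -/
lemma exists_adapted_basis {G ι : Type*} [Group G] (b : FreeGroupBasis ι G) (π : G →* ℤˣ)
    {t : G} (ht : π t = -1) : ∃ i₀ : ι, ∃ e : FreeGroup (Option {i // i ≠ i₀}) ≃* G,
      π (e (of none)) = -1 ∧ ∀ i, π (e (of (some i))) = 1 := by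
  classical
  obtain ⟨i₀, hi₀⟩ : ∃ i, π (b i) ≠ 1 := by
    by_contra! hcon
    have := b.ext_hom π 1 (by simpa using hcon)
    rw [this] at ht
    simp at ht
  replace hi₀ := (Int.units_eq_one_or _).resolve_left hi₀
  let b' := b.reindex (Equiv.optionSubtypeNe i₀).symm
  have hb0 : π (b' none) = -1 := by simpa [b'] using hi₀
  let ε : {i // i ≠ i₀} → FreeGroup (Option {i // i ≠ i₀}) := fun i =>
    if π (b' (some i)) = 1 then 1 else of none
  let up : FreeGroup (Option {i // i ≠ i₀}) →* FreeGroup (Option {i // i ≠ i₀}) :=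
    FreeGroup.lift fun
      | none => of none
      | some i => of (some i) * ε i
  let down : FreeGroup (Option {i // i ≠ i₀}) →* FreeGroup (Option {i // i ≠ i₀}) :=
    FreeGroup.lift fun
      | none => of none
      | some i => of (some i) * (ε i)⁻¹
  have hup : ∀ i, up (ε i) = ε i := fun i => by
    dsimp only [ε]; split_ifs <;> simp [up]
  have hdown : ∀ i, down (ε i) = ε i := fun i => by
    dsimp only [ε]; split_ifs <;> simp [down]
  let θ : FreeGroup (Option {i // i ≠ i₀}) ≃* FreeGroup (Option {i // i ≠ i₀}) :=
    MonoidHom.toMulEquiv up down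
      (by
        ext x
        rcases x with _ | i
        · simp [up, down]
        · have : down (up (of (some i))) = down (of (some i) * ε i) := by simp [up]
          simp only [MonoidHom.comp_apply, this, _root_.map_mul, hdown]
          simp [down])
      (by
        ext x
        rcases x with _ | i
        · simp [up, down]
        · have : up (down (of (some i))) = up (of (some i) * (ε i)⁻¹) := by simp [down]
          simp only [MonoidHom.comp_apply, this, _root_.map_mul, _root_.map_inv, hup]
          simp [up])
  refine ⟨i₀, θ.trans b'.repr.symm, ?_, fun i => ?_⟩
  · have : θ (of none) = of none := by simp [θ, up]
    rw [MulEquiv.trans_apply, this]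
    exact hb0
  · have h1 : θ (of (some i)) = of (some i) * ε i := by simp [θ, up]
    have h2 : ∀ x, b'.repr.symm (of x) = b' x := fun x => rfl
    rw [MulEquiv.trans_apply, h1, _root_.map_mul, _root_.map_mul, h2]
    dsimp only [ε]
    split_ifs with h
    · simp [h]
    · rw [h2, hb0, (Int.units_eq_one_or _).resolve_left h]
      simp

end IndexTwo

section NormalForm

open FreeGroup

lemma toOut_eq_one_iff {n : ℕ} {g : FrAut n} :
    toOut n g = 1 ↔ ∃ a, MulAut.conj a = g := by
  rw [← MonoidHom.mem_ker, toOut, QuotientGroup.ker_mk']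
  rfl

lemma toOut_surjective (n : ℕ) : Function.Surjective (toOut n) := QuotientGroup.mk'_surjective _

/-- The subgroup of lifts of powers of `f`. -/
def liftGroup {n : ℕ} (f : OutF n) : Subgroup (FrAut n) := (Subgroup.zpowers f).comap (toOut n)

lemma toOut_liftGroup {n : ℕ} {f : OutF n} (hf : orderOf f = 2) (g : liftGroup f) :
    toOut n g = 1 ∨ toOut n g = f := by
  obtain ⟨k, hk⟩ := g.2
  have hsq : f ^ (2 : ℤ) = 1 := by
    rw [show (2 : ℤ) = ((2 : ℕ) : ℤ) from rfl, zpow_natCast, ← hf, pow_orderOf_eq_one]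
  simp only at hk
  rw [← hk]
  rcases Int.even_or_odd' k with ⟨j, rfl | rfl⟩
  · left
    rw [_root_.zpow_mul, hsq, _root_.one_zpow]
  · right
    rw [_root_.zpow_add, _root_.zpow_mul, hsq, _root_.one_zpow, one_mul, zpow_one]

open Classical in
/-- The homomorphism to the group of order two whose kernel is the group of inner
automorphisms. -/
noncomputable def liftSign {n : ℕ} {f : OutF n} (hf : orderOf f = 2) : liftGroup f →* ℤˣ where
  toFun g := if toOut n g = 1 then 1 else -1
  map_one' := by simp
  map_mul' g h := by
    have hne : f ≠ 1 := fun h => by simp [h] at hf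
    have hsq : f * f = 1 := by rw [← pow_two, ← hf, pow_orderOf_eq_one]
    rw [Subgroup.coe_mul, _root_.map_mul]
    rcases toOut_liftGroup hf g with h1 | h1 <;> rcases toOut_liftGroup hf h with h2 | h2 <;>
      simp [h1, h2, hne, hsq]

lemma liftSign_eq_one_iff {n : ℕ} {f : OutF n} (hf : orderOf f = 2) {g : liftGroup f} :
    liftSign hf g = 1 ↔ toOut n g = 1 := by
  simp [liftSign]

/-- The inner automorphisms, as elements of the group of lifts. -/
def liftConj {n : ℕ} (f : OutF n) : FreeGroup (Fin n) →* liftGroup f :=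
  MulAut.conj.codRestrict (liftGroup f) fun a => by
    rw [liftGroup, Subgroup.mem_comap, toOut_eq_one_iff.2 ⟨a, rfl⟩]
    exact one_mem _

lemma range_liftConj {n : ℕ} {f : OutF n} (hf : orderOf f = 2) :
    (liftConj f).range = (liftSign hf).ker := by
  ext g
  rw [MonoidHom.mem_ker, liftSign_eq_one_iff, toOut_eq_one_iff]
  exact ⟨fun ⟨a, ha⟩ => ⟨a, congrArg Subtype.val ha⟩, fun ⟨a, ha⟩ => ⟨a, Subtype.ext ha⟩⟩

lemma liftConj_injective {n : ℕ} (hn : 3 ≤ n) (f : OutF n) :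
    Function.Injective (liftConj f) := by
  have : Nontrivial (Fin n) := Fin.nontrivial_iff_two_le.2 (by omega)
  exact fun a b h => conj_injective_freeGroup (congrArg Subtype.val h)

lemma fg_liftGroup {n : ℕ} {f : OutF n} (hf : orderOf f = 2) : Group.FG (liftGroup f) := by
  obtain ⟨t, ht⟩ := toOut_surjective n f
  have htm : t ∈ liftGroup f := by
    rw [liftGroup, Subgroup.mem_comap, ht]
    exact Subgroup.mem_zpowers f
  let ψ : FreeGroup (Option (Fin n)) →* liftGroup f := FreeGroup.lift fun
    | none => ⟨t, htm⟩
    | some i => liftConj f (of i)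
  have hinn : ∀ a, liftConj f a ∈ ψ.range := by
    intro a
    have : (liftConj f).range ≤ ψ.range := by
      rw [MonoidHom.range_eq_map, ← FreeGroup.closure_range_of, MonoidHom.map_closure,
        Subgroup.closure_le]
      rintro - ⟨-, ⟨i, rfl⟩, rfl⟩
      exact ⟨of (some i), by simp [ψ]⟩
    exact this ⟨a, rfl⟩
  have hker : ∀ g : liftGroup f, toOut n g = 1 → g ∈ ψ.range := by
    intro g hg
    obtain ⟨a, ha⟩ := toOut_eq_one_iff.1 hg
    have : liftConj f a = g := Subtype.ext ha
    exact this ▸ hinn a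
  refine Group.fg_of_surjective (f := ψ) (MonoidHom.range_eq_top.1 ?_)
  refine (Subgroup.eq_top_iff' _).2 fun g => ?_
  rcases toOut_liftGroup hf g with hg | hg
  · exact hker g hg
  · have h1 := hker (g * ⟨t, htm⟩⁻¹) (by simp [hg, ht])
    have h2 : (⟨t, htm⟩ : liftGroup f) ∈ ψ.range := ⟨of none, by simp [ψ]⟩
    simpa using mul_mem h1 h2

/-- An outer automorphism of order two without finite order lifts is represented by an explicit
automorphism in a suitable basis. -/
theorem exists_normal_form {n : ℕ} (hn : 3 ≤ n) {f : OutF n} (hf : orderOf f = 2)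
    (hnl : ¬ ∃ h : FrAut n, IsOfFinOrder h ∧ toOut n h = f) :
    ∃ (κ : Type) (e : FreeGroup (Option (κ ⊕ κ)) ≃* FreeGroup (Fin n)) (t : FrAut n),
      toOut n t = f ∧ t (e (of none)) = e (of none) ∧
      (∀ i, t (e (of (some (Sum.inl i)))) = e (of (some (Sum.inr i)))) ∧
      ∀ i, t (e (of (some (Sum.inr i)))) =
        e (of none * of (some (Sum.inl i)) * (of none)⁻¹) := by
  have htf : ∀ g : liftGroup f, IsOfFinOrder g → g = 1 := by
    intro g hg
    rcases toOut_liftGroup hf g with h | h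
    · obtain ⟨a, ha⟩ := toOut_eq_one_iff.1 h
      replace ha : liftConj f a = g := Subtype.ext ha
      rw [← ha, (liftConj_injective hn f).isOfFinOrder_iff] at hg
      rw [← ha, (isOfFinOrder_iff_eq_one _).1 hg, _root_.map_one]
    · exact absurd ⟨g, (liftGroup f).subtype.isOfFinOrder hg, h⟩ hnl
  have := fg_liftGroup hf
  let c : FreeGroup (Fin n) ≃* (liftSign hf).ker :=
    (MonoidHom.ofInjective (liftConj_injective hn f)).trans
      (MulEquiv.subgroupCongr (range_liftConj hf))
  have hc : ∀ a, ((c a : liftGroup f) : FrAut n) = MulAut.conj a := fun a => rfl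
  have : IsFreeGroup (liftSign hf).ker := IsFreeGroup.ofMulEquiv c
  have := isFreeGroup_of_ker htf (liftSign hf)
  obtain ⟨t₀, ht₀⟩ := toOut_surjective n f
  have hne : f ≠ 1 := fun h => by simp [h] at hf
  have hodd : ∀ t : liftGroup f, liftSign hf t = -1 ↔ toOut n t = f := by
    intro t
    rcases toOut_liftGroup hf t with h | h
    · rw [(liftSign_eq_one_iff hf).2 h, h]
      simp [hne.symm]
    · refine ⟨fun _ => h, fun _ => (Int.units_eq_one_or _).resolve_left ?_⟩
      rw [liftSign_eq_one_iff, h]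
      exact hne
  have ht₀m : t₀ ∈ liftGroup f := by
    rw [liftGroup, Subgroup.mem_comap, ht₀]
    exact Subgroup.mem_zpowers f
  obtain ⟨κ, b, hb0, hb1⟩ : ∃ (κ : Type) (b : FreeGroup (Option κ) ≃* liftGroup f),
      liftSign hf (b (of none)) = -1 ∧ ∀ i, liftSign hf (b (of (some i))) = 1 := by
    obtain ⟨i₀, b, hb0, hb1⟩ := exists_adapted_basis (IsFreeGroup.basis (liftGroup f))
      (liftSign hf) (t := ⟨t₀, ht₀m⟩) ((hodd _).2 ht₀)
    exact ⟨_, b, hb0, hb1⟩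
  have hrange := range_lift_evenGen ((liftSign hf).comp b.toMonoidHom) hb0 hb1
  let Φ : FreeGroup (Option (κ ⊕ κ)) →* liftGroup f :=
    b.toMonoidHom.comp (FreeGroup.lift evenGen)
  have hΦ : Function.Injective Φ := b.injective.comp lift_evenGen_injective
  have hΦr : Φ.range = (liftSign hf).ker := by
    rw [MonoidHom.range_comp, hrange]
    ext g
    simp only [Subgroup.mem_map, MonoidHom.mem_ker, MonoidHom.comp_apply]
    refine ⟨?_, fun hg => ⟨b.symm g, by simpa using hg, by simp⟩⟩
    rintro ⟨x, hx, rfl⟩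
    exact hx
  let e : FreeGroup (Option (κ ⊕ κ)) ≃* FreeGroup (Fin n) :=
    ((MonoidHom.ofInjective hΦ).trans (MulEquiv.subgroupCongr hΦr)).trans c.symm
  have he : ∀ w, MulAut.conj (e w) = (Φ w : FrAut n) := by
    intro w
    rw [← hc]
    simp only [e, MulEquiv.trans_apply, MulEquiv.apply_symm_apply]
    rfl
  have hkey : ∀ u w, b (of none) * Φ u * (b (of none))⁻¹ = Φ w →
      (b (of none) : FrAut n) (e u) = e w := by
    intro u w h
    have : Nontrivial (Fin n) := Fin.nontrivial_iff_two_le.2 (by omega)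
    refine conj_injective_freeGroup ?_
    rw [he, ← h, Subgroup.coe_mul, Subgroup.coe_mul, ← he]
    ext x
    simp
  have hof : ∀ x, Φ (of x) = b (evenGen x) := fun x => by simp [Φ]
  refine ⟨κ, e, b (of none), (hodd _).1 hb0, hkey _ _ ?_, fun i => hkey _ _ ?_,
    fun i => hkey _ _ ?_⟩
  · rw [hof]
    simp [evenGen, pow_two, mul_assoc]
  · rw [hof, hof]
    simp [evenGen]
  · rw [_root_.map_mul, _root_.map_mul, _root_.map_inv, hof, hof, hof]
    simp [evenGen, pow_two, mul_assoc]

end NormalForm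

section CommonPrefix

/-- The length of the longest common prefix of two lists. -/
def commonPrefix {β : Type*} [DecidableEq β] : List β → List β → ℕ
  | a :: l, b :: m => if a = b then commonPrefix l m + 1 else 0
  | _, _ => 0

variable {β : Type*} [DecidableEq β]

lemma commonPrefix_comm (l m : List β) : commonPrefix l m = commonPrefix m l := by
  induction l generalizing m with
  | nil => cases m <;> rfl
  | cons a l ih =>
    cases m with
    | nil => rfl
    | cons b m => simp [commonPrefix, ih m, eq_comm]

lemma le_commonPrefix_iff {l m : List β} {k : ℕ} :
    k ≤ commonPrefix l m ↔ k ≤ l.length ∧ k ≤ m.length ∧ l.take k = m.take k := by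
  induction l generalizing m k with
  | nil =>
    cases m <;> simp +contextual [commonPrefix]
  | cons a l ih =>
    cases m with
    | nil => simp +contextual [commonPrefix]
    | cons b m =>
      cases k with
      | zero => simp
      | succ k =>
        by_cases h : a = b
        · simp [commonPrefix, h, ih]
        · simp [commonPrefix, h]

lemma commonPrefix_self (l : List β) : commonPrefix l l = l.length :=
  le_antisymm (le_commonPrefix_iff.1 le_rfl).1 (le_commonPrefix_iff.2 ⟨le_rfl, le_rfl, rfl⟩)

lemma commonPrefix_eq_of_lt {l m r : List β} (h : commonPrefix l m < commonPrefix m r) :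
    commonPrefix l r = commonPrefix l m := by
  obtain ⟨h1, h2, h3⟩ := le_commonPrefix_iff.1 (le_refl (commonPrefix m r))
  have htake : ∀ k ≤ commonPrefix m r, m.take k = r.take k := fun k hk => by
    rw [← min_eq_left hk, ← List.take_take, h3, List.take_take]
  refine le_antisymm (le_of_not_gt fun hlt => ?_) ?_
  · obtain ⟨h4, h5, h6⟩ := le_commonPrefix_iff.1 (Nat.succ_le_of_lt hlt)
    have : commonPrefix l m + 1 ≤ commonPrefix l m :=
      le_commonPrefix_iff.2 ⟨h4, by omega, by rw [h6, htake _ h]⟩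
    omega
  · obtain ⟨h4, h5, h6⟩ := le_commonPrefix_iff.1 (le_refl (commonPrefix l m))
    exact le_commonPrefix_iff.2 ⟨h4, by omega, by rw [h6, htake _ h.le]⟩

lemma head?_drop_commonPrefix_ne (l m : List β) {a b : β}
    (ha : (l.drop (commonPrefix l m)).head? = some a)
    (hb : (m.drop (commonPrefix l m)).head? = some b) : a ≠ b := by
  induction l generalizing m with
  | nil => simp at ha
  | cons c l ih =>
    cases m with
    | nil => simp at hb
    | cons d m =>
      by_cases h : c = d
      · simp only [commonPrefix, h, if_true, List.drop_succ_cons] at ha hb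
        exact ih m ha hb
      · simp only [commonPrefix, h, if_false, List.drop_zero, List.head?_cons,
          Option.some.injEq] at ha hb
        rwa [← ha, ← hb]

end CommonPrefix

section Cancellation

open FreeGroup

variable {α : Type*} [DecidableEq α]

/-- The length of the common initial segment of two elements of a free group. -/
def gromov (x y : FreeGroup α) : ℕ := commonPrefix x.toWord y.toWord

lemma gromov_comm (x y : FreeGroup α) : gromov x y = gromov y x := commonPrefix_comm _ _

lemma gromov_le_left (x y : FreeGroup α) : gromov x y ≤ x.norm :=
  (le_commonPrefix_iff.1 (le_refl (gromov x y))).1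

lemma gromov_le_right (x y : FreeGroup α) : gromov x y ≤ y.norm :=
  (le_commonPrefix_iff.1 (le_refl (gromov x y))).2.1

lemma take_gromov (x y : FreeGroup α) :
    x.toWord.take (gromov x y) = y.toWord.take (gromov x y) :=
  (le_commonPrefix_iff.1 (le_refl (gromov x y))).2.2

lemma gromov_self (x : FreeGroup α) : gromov x x = x.norm := commonPrefix_self _

lemma gromov_eq_of_lt {x y z : FreeGroup α} (h : gromov x y < gromov y z) :
    gromov x z = gromov x y :=
  commonPrefix_eq_of_lt h

lemma toWord_inv_mul (x y : FreeGroup α) : (x⁻¹ * y).toWord =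
    invRev (x.toWord.drop (gromov x y)) ++ y.toWord.drop (gromov x y) := by
  set k := gromov x y with hk
  have hmul : x⁻¹ * y = mk (invRev (x.toWord.drop k) ++ y.toWord.drop k) := by
    have hx : x = mk (x.toWord.take k) * mk (x.toWord.drop k) := by
      rw [mul_mk, List.take_append_drop, mk_toWord]
    have hy : y = mk (x.toWord.take k) * mk (y.toWord.drop k) := by
      rw [hk, take_gromov, mul_mk, List.take_append_drop, mk_toWord]
    rw [← mul_mk, ← inv_mk]
    calc x⁻¹ * y = (mk (x.toWord.take k) * mk (x.toWord.drop k))⁻¹ *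
          (mk (x.toWord.take k) * mk (y.toWord.drop k)) := by rw [← hx, ← hy]
      _ = _ := by group
  have hdrop : ∀ (z : FreeGroup α), IsReduced (z.toWord.drop k) := fun z =>
    List.IsChain.drop isReduced_toWord k
  have hinv : IsReduced (invRev (x.toWord.drop k)) := by
    rw [isReduced_iff_reduce_eq, reduce_invRev, (hdrop x).reduce_eq]
  rw [hmul, toWord_mk]
  refine IsReduced.reduce_eq ?_
  rw [FreeGroup.IsReduced, List.isChain_append]
  refine ⟨hinv, hdrop y, ?_⟩
  intro a ha b hb hab
  have hne : (a.1, !a.2) ≠ b := by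
    refine head?_drop_commonPrefix_ne x.toWord y.toWord ?_ hb
    rw [invRev, List.getLast?_reverse, List.head?_map] at ha
    simp only [Option.mem_def, Option.map_eq_some_iff] at ha
    obtain ⟨c, hc, rfl⟩ := ha
    simp only [Bool.not_not]
    exact hc
  obtain ⟨i, s⟩ := a
  obtain ⟨j, t⟩ := b
  simp only at hab
  subst hab
  cases s <;> cases t <;> simp_all

lemma norm_inv_mul (x y : FreeGroup α) :
    (x⁻¹ * y).norm + 2 * gromov x y = x.norm + y.norm := by
  have h1 := gromov_le_left x y
  have h2 := gromov_le_right x y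
  simp only [FreeGroup.norm] at h1 h2 ⊢
  rw [toWord_inv_mul, List.length_append, invRev_length, List.length_drop, List.length_drop]
  omega

lemma two_mul_gromov_inv_lt {x : FreeGroup α} (hx : x ≠ 1) : 2 * gromov x x⁻¹ < x.norm := by
  by_contra! hle
  set k := gromov x x⁻¹ with hk
  have hkn : k ≤ x.norm := gromov_le_left _ _
  have ht : x.toWord.take k = (invRev x.toWord).take k := by
    rw [← toWord_inv]
    exact take_gromov x x⁻¹
  set a := x.toWord.take k
  set r := x.toWord.drop k
  have har : x.toWord = a ++ r := (List.take_append_drop _ _).symm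
  have hla : a.length = k := List.length_take_of_le hkn
  have hlr : r.length = x.norm - k := List.length_drop
  set b := (invRev a).take (k - r.length)
  have hab : a = invRev r ++ b := by
    conv_lhs => rw [ht, har, invRev_append, List.take_append, invRev_length]
    rw [List.take_of_length_le (by rw [invRev_length]; omega)]
  have hlb : b.length = k - r.length := by
    rw [List.length_take_of_le (by rw [invRev_length]; omega)]
  have hbb : b = invRev b := by
    have h : b = (invRev a).take b.length := by rw [hlb]
    rw [h]
    conv_lhs => rw [hab, invRev_append, List.take_append_of_le_length (by rw [invRev_length]),
      ← invRev_length, List.take_length]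
    rw [← h]
  have hb1 : (mk b : FreeGroup α) = 1 := by
    have h : (mk b : FreeGroup α) ^ 2 = 1 := by
      rw [pow_two]
      nth_rw 1 [hbb]
      rw [← inv_mk, inv_mul_cancel]
    exact (pow_eq_one_iff_left two_ne_zero).1 h
  apply hx
  rw [← mk_toWord (x := x), har, ← mul_mk, hab, ← mul_mk, hb1, mul_one, ← inv_mk, inv_mul_cancel]

end Cancellation

section Transvection

open FreeGroup

variable {α : Type*}

/-- The inverse of a letter. -/
def bar (c : α × Bool) : α × Bool := (c.1, !c.2)

@[simp] lemma bar_fst (c : α × Bool) : (bar c).1 = c.1 := rfl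

@[simp] lemma bar_bar (c : α × Bool) : bar (bar c) = c := by simp [bar]

@[simp] lemma mk_bar (c : α × Bool) : (mk [bar c] : FreeGroup α) = (mk [c])⁻¹ := rfl

lemma eq_or_eq_bar {c d : α × Bool} (h : c.1 = d.1) : c = d ∨ c = bar d := by
  obtain ⟨i, s⟩ := c
  obtain ⟨j, t⟩ := d
  simp only at h
  subst h
  cases s <;> cases t <;> simp [bar]

lemma bar_ne (c : α × Bool) : bar c ≠ c := by
  obtain ⟨i, s⟩ := c
  cases s <;> simp [bar]

lemma hom_ext_letter {G : Type*} [Group G] {f g : FreeGroup α →* G} (d : α × Bool)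
    (hd : f (mk [d]) = g (mk [d])) (h : ∀ c : α × Bool, c.1 ≠ d.1 → f (mk [c]) = g (mk [c])) :
    f = g := by
  refine FreeGroup.ext_hom _ _ fun i => ?_
  change f (mk [(i, true)]) = g (mk [(i, true)])
  by_cases hi : i = d.1
  · rcases eq_or_eq_bar (c := (i, true)) hi with h' | h'
    · rw [h', hd]
    · rw [h', mk_bar, _root_.map_inv, _root_.map_inv, hd]
  · exact h _ hi

variable [DecidableEq α]

/-- The endomorphism which sends the letter `d` to `c * d` and fixes the other generators. -/
def transvectionHom (c d : α × Bool) : FreeGroup α →* FreeGroup α :=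
  FreeGroup.lift fun i =>
    if i = d.1 then (if d.2 then mk [c] * of i else of i * (mk [c])⁻¹) else of i

lemma transvectionHom_self (c d : α × Bool) :
    transvectionHom c d (mk [d]) = mk [c] * mk [d] := by
  obtain ⟨i, s⟩ := d
  cases s
  · have h : (mk [(i, false)] : FreeGroup α) = (of i)⁻¹ := rfl
    simp [h, transvectionHom]
  · change transvectionHom c (i, true) (of i) = mk [c] * of i
    simp [transvectionHom]

lemma transvectionHom_of_ne (c : α × Bool) {d e : α × Bool} (h : e.1 ≠ d.1) :
    transvectionHom c d (mk [e]) = mk [e] := by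
  obtain ⟨i, s⟩ := e
  simp only at h
  cases s
  · have h : (mk [(i, false)] : FreeGroup α) = (of i)⁻¹ := rfl
    simp_all [transvectionHom]
  · change transvectionHom c d (of i) = of i
    simp_all [transvectionHom]

lemma transvectionHom_bar_comp {c d : α × Bool} (h : c.1 ≠ d.1) :
    (transvectionHom (bar c) d).comp (transvectionHom c d) = MonoidHom.id _ := by
  refine hom_ext_letter d ?_ fun e he => ?_
  · simp only [MonoidHom.comp_apply, transvectionHom_self, _root_.map_mul,
      transvectionHom_of_ne _ h, mk_bar, MonoidHom.id_apply]
    group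
  · simp [transvectionHom_of_ne _ he]

/-- The automorphism which sends the letter `d` to `c * d` and fixes the other generators. -/
def transvection (c d : α × Bool) (h : c.1 ≠ d.1) : MulAut (FreeGroup α) :=
  (transvectionHom c d).toMulEquiv (transvectionHom (bar c) d) (transvectionHom_bar_comp h)
    (by simpa using transvectionHom_bar_comp (c := bar c) (d := d) h)

lemma transvection_self {c d : α × Bool} (h : c.1 ≠ d.1) :
    transvection c d h (mk [d]) = mk [c] * mk [d] := transvectionHom_self c d

lemma transvection_of_ne {c d : α × Bool} (h : c.1 ≠ d.1) {e : α × Bool} (he : e.1 ≠ d.1) :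
    transvection c d h (mk [e]) = mk [e] := transvectionHom_of_ne c he

end Transvection

section Code

open FreeGroup

variable {α : Type*} [Fintype α]

/-- A positional encoding of words by natural numbers. -/
noncomputable def wordCode (l : List (α × Bool)) : ℕ :=
  Nat.ofDigits (Fintype.card (α × Bool) + 1)
    (l.map fun c => (Fintype.equivFin (α × Bool) c : ℕ)).reverse

lemma wordCode_append_lt {a b : List (α × Bool)} (h : wordCode a < wordCode b)
    (r : List (α × Bool)) : wordCode (a ++ r) < wordCode (b ++ r) := by
  simp only [wordCode, List.map_append, List.reverse_append, Nat.ofDigits_append] at h ⊢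
  gcongr

lemma eq_of_wordCode_eq {a b : List (α × Bool)} (hl : a.length = b.length)
    (h : wordCode a = wordCode b) : a = b := by
  cases isEmpty_or_nonempty (α × Bool)
  · exact Subsingleton.elim _ _
  have hinj : Function.Injective fun c => (Fintype.equivFin (α × Bool) c : ℕ) :=
    Fin.val_injective.comp (Equiv.injective _)
  have hlt : ∀ (l : List (α × Bool)),
      ∀ k ∈ (l.map fun c => (Fintype.equivFin (α × Bool) c : ℕ)).reverse,
        k < Fintype.card (α × Bool) + 1 := by
    intro l k hk
    simp only [List.mem_reverse, List.mem_map] at hk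
    obtain ⟨c, -, rfl⟩ := hk
    exact (Fin.is_lt _).trans (Nat.lt_succ_self _)
  have := Nat.ofDigits_inj_of_len_eq (Nat.lt_add_of_pos_left Fintype.card_pos) (by simp [hl])
    (hlt a) (hlt b) h
  exact hinj.list_map (List.reverse_injective this)

variable [DecidableEq α]

/-- The code of the initial half of a word. -/
noncomputable def halfCode (x : FreeGroup α) : ℕ := wordCode (x.toWord.take (x.norm / 2))

end Code

section Nielsen

open FreeGroup

lemma apply_letter_ne_one {α : Type*} (φ : MulAut (FreeGroup α)) (c : α × Bool) : φ (mk [c]) ≠ 1 := by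
  rw [ne_eq, EmbeddingLike.map_eq_one_iff]
  obtain ⟨i, s⟩ := c
  cases s
  · exact inv_ne_one.2 (of_ne_one i)
  · exact of_ne_one i

variable {α : Type*} [DecidableEq α] [Fintype α]

/-- An automorphism is Nielsen minimal if its complexity does not decrease after any
transvection. -/
def IsNielsenMin (φ : MulAut (FreeGroup α)) : Prop :=
  ∀ c d : α × Bool, c.1 ≠ d.1 →
    (φ (mk [d])).norm ≤ (φ (mk [c]) * φ (mk [d])).norm ∧
    ((φ (mk [c]) * φ (mk [d])).norm = (φ (mk [d])).norm →
      halfCode (φ (mk [d])) + halfCode (φ (mk [d]))⁻¹ ≤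
        halfCode (φ (mk [c]) * φ (mk [d])) + halfCode (φ (mk [c]) * φ (mk [d]))⁻¹)

lemma sum_transvection (F : FreeGroup α → ℕ) (φ : MulAut (FreeGroup α)) {c d : α × Bool}
    (h : c.1 ≠ d.1) :
    ∑ e, F ((φ * transvection c d h) (mk [e])) + (F (φ (mk [d])) + F (φ (mk [d]))⁻¹) =
      ∑ e, F (φ (mk [e])) +
        (F (φ (mk [c]) * φ (mk [d])) + F (φ (mk [c]) * φ (mk [d]))⁻¹) := by
  rw [← Finset.sum_add_sum_compl {d, bar d},
    ← Finset.sum_add_sum_compl {d, bar d} (fun e => F (φ (mk [e]))),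
    Finset.sum_pair (bar_ne d).symm, Finset.sum_pair (bar_ne d).symm]
  have hrest : ∑ e ∈ ({d, bar d} : Finset (α × Bool))ᶜ, F ((φ * transvection c d h) (mk [e])) =
      ∑ e ∈ ({d, bar d} : Finset (α × Bool))ᶜ, F (φ (mk [e])) := by
    refine Finset.sum_congr rfl fun e he => ?_
    have hne : e.1 ≠ d.1 := fun h' => by
      rcases eq_or_eq_bar h' with rfl | rfl <;> simp at he
    rw [MulAut.mul_apply, transvection_of_ne h hne]
  rw [hrest]
  simp only [mk_bar, _root_.map_inv, MulAut.mul_apply, transvection_self h, _root_.map_mul]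
  ring

lemma exists_isNielsenMin (M : Subgroup (MulAut (FreeGroup α)))
    (hM : ∀ (c d : α × Bool) (h : c.1 ≠ d.1), transvection c d h ∈ M) (φ : MulAut (FreeGroup α)) :
    ∃ m ∈ M, IsNielsenMin (φ * m) := by
  let μ : M → ℕ ×ₗ ℕ := fun m =>
    toLex (∑ e, ((φ * (m : MulAut (FreeGroup α))) (mk [e])).norm,
      ∑ e, halfCode ((φ * (m : MulAut (FreeGroup α))) (mk [e])))
  obtain ⟨m, hm⟩ : ∃ m, ∀ m', ¬ μ m' < μ m := by
    obtain ⟨-, ⟨m, rfl⟩, h⟩ := WellFounded.has_min (wellFounded_lt (α := ℕ ×ₗ ℕ)) (Set.range μ)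
      ⟨_, 1, rfl⟩
    exact ⟨m, fun m' => h _ ⟨m', rfl⟩⟩
  refine ⟨m, m.2, fun c d h => ?_⟩
  have h' := hm (m * ⟨_, hM c d h⟩)
  simp only [μ, Prod.Lex.toLex_lt_toLex, Subgroup.coe_mul, ← mul_assoc] at h'
  have h1 := sum_transvection FreeGroup.norm (φ * (m : MulAut (FreeGroup α))) h
  have h2 := sum_transvection halfCode (φ * (m : MulAut (FreeGroup α))) h
  simp only [FreeGroup.norm_inv_eq] at h1
  push Not at h'
  refine ⟨by omega, fun heq => ?_⟩
  have := h'.2 (by omega)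
  omega

variable {φ : MulAut (FreeGroup α)}

lemma IsNielsenMin.two_mul_gromov_le (hφ : IsNielsenMin φ) {c d : α × Bool} (h : c ≠ d) :
    2 * gromov (φ (mk [c])) (φ (mk [d])) ≤ (φ (mk [c])).norm := by
  by_cases h' : c.1 = d.1
  · rcases eq_or_eq_bar h'.symm with h'' | rfl
    · exact absurd h''.symm h
    · rw [mk_bar, _root_.map_inv]
      exact (two_mul_gromov_inv_lt (apply_letter_ne_one φ c)).le
  · have h1 := (hφ (bar c) d h').1
    rw [mk_bar, _root_.map_inv] at h1
    have := norm_inv_mul (φ (mk [c])) (φ (mk [d]))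
    omega

/-- Comparison of the initial half of the image of a letter and of its inverse. -/
lemma IsNielsenMin.wordCode_le (hφ : IsNielsenMin φ) {c d : α × Bool} (h : c.1 ≠ d.1) {k : ℕ}
    (hk : gromov (φ (mk [c])) (φ (mk [d])) = k) (hkc : 2 * k = (φ (mk [c])).norm) :
    wordCode ((φ (mk [c])).toWord.take k) ≤ wordCode ((φ (mk [c]))⁻¹.toWord.take k) := by
  have hkd : 2 * k ≤ (φ (mk [d])).norm := by
    rw [← hk, gromov_comm]
    exact hφ.two_mul_gromov_le fun h' => h (congrArg Prod.fst h'.symm)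
  have h1 := (hφ (bar c) d h).2
  rw [mk_bar, _root_.map_inv] at h1
  have hn := norm_inv_mul (φ (mk [c])) (φ (mk [d]))
  have hw := toWord_inv_mul (φ (mk [c])) (φ (mk [d]))
  have ht := take_gromov (φ (mk [c])) (φ (mk [d]))
  rw [hk] at hn hw ht
  generalize φ (mk [c]) = x at *
  generalize φ (mk [d]) = y at *
  have hnorm : (x⁻¹ * y).norm = y.norm := by omega
  specialize h1 hnorm
  set b := x.toWord.take k
  set a := x⁻¹.toWord.take k
  set r := y.toWord.drop k
  have hxl : x.toWord.length = 2 * k := hkc.symm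
  have hlb : b.length = k := List.length_take_of_le (by omega)
  have hla : a.length = k := List.length_take_of_le (by rw [toWord_inv, invRev_length]; omega)
  have hyb : y.toWord = b ++ r := by rw [ht, List.take_append_drop]
  have ha : invRev (x.toWord.drop k) = a := by
    have : x⁻¹.toWord = invRev (x.toWord.drop k) ++ invRev b := by
      rw [toWord_inv, ← invRev_append, List.take_append_drop]
    rw [show a = x⁻¹.toWord.take k from rfl, this, List.take_append_of_le_length,
      List.take_of_length_le] <;>
    simp [invRev_length, hxl] <;> omega
  rw [ha] at hw
  have hrl : r.length = y.norm - k := List.length_drop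
  have key : ∀ (z : FreeGroup α) (e : List (α × Bool)), z.norm = y.norm → e.length = k →
      z.toWord = e ++ r → halfCode z = wordCode (e ++ r.take (y.norm / 2 - k)) ∧
        halfCode z⁻¹ = wordCode ((invRev r).take (y.norm / 2)) := by
    intro z e hz he hzw
    rw [halfCode, halfCode, norm_inv_eq, hz, toWord_inv, hzw, invRev_append, List.take_append,
      he, List.take_of_length_le (by omega), List.take_append_of_le_length]
    · exact ⟨rfl, rfl⟩
    · rw [invRev_length]
      omega
  obtain ⟨h2, h3⟩ := key y b rfl hlb hyb
  obtain ⟨h4, h5⟩ := key _ a hnorm hla hw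
  by_contra! hlt
  have := wordCode_append_lt hlt (r.take (y.norm / 2 - k))
  omega

lemma IsNielsenMin.gromov_add_lt (hφ : IsNielsenMin φ) {x y z : α × Bool} (hxy : x ≠ y)
    (hyz : bar y ≠ z) :
    gromov (φ (mk [x])) (φ (mk [y])) + gromov (φ (mk [bar y])) (φ (mk [z])) <
      (φ (mk [y])).norm := by
  have hy := two_mul_gromov_inv_lt (apply_letter_ne_one φ y)
  have h1 := hφ.two_mul_gromov_le hxy.symm
  have h2 := hφ.two_mul_gromov_le hyz
  rw [gromov_comm] at h1
  have hny : (φ (mk [bar y])).norm = (φ (mk [y])).norm := by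
    rw [mk_bar, _root_.map_inv, norm_inv_eq]
  by_contra! hle
  have hx1 : y.1 ≠ x.1 := fun h => by
    rcases eq_or_eq_bar h.symm with h' | rfl
    · exact hxy h'
    · have hg : gromov (φ (mk [bar y])) (φ (mk [y])) = gromov (φ (mk [y])) (φ (mk [y]))⁻¹ := by
        rw [gromov_comm, mk_bar, _root_.map_inv]
      omega
  have hz1 : (bar y).1 ≠ z.1 := fun h => by
    rcases eq_or_eq_bar h.symm with h' | rfl
    · exact hyz h'.symm
    · have hg : gromov (φ (mk [bar y])) (φ (mk [bar (bar y)])) =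
          gromov (φ (mk [y])) (φ (mk [y]))⁻¹ := by
        rw [gromov_comm, bar_bar, mk_bar, _root_.map_inv]
      omega
  set k := gromov (φ (mk [x])) (φ (mk [y]))
  have hk : gromov (φ (mk [bar y])) (φ (mk [z])) = k := by omega
  have h3 := hφ.wordCode_le hx1 (k := k) (gromov_comm _ _) (by omega)
  have h4 := hφ.wordCode_le hz1 hk (by omega)
  rw [mk_bar, _root_.map_inv, inv_inv] at h4
  have hle' : k ≤ (φ (mk [y])).toWord.length := by
    have : (φ (mk [y])).toWord.length = (φ (mk [y])).norm := rfl
    omega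
  have heq : (φ (mk [y])).toWord.take k = (φ (mk [y]))⁻¹.toWord.take k := by
    refine eq_of_wordCode_eq ?_ (le_antisymm h3 h4)
    simp [toWord_inv, invRev_length]
  have : k ≤ gromov (φ (mk [y])) (φ (mk [y]))⁻¹ :=
    le_commonPrefix_iff.2 ⟨hle', by rwa [toWord_inv, invRev_length], heq⟩
  omega

lemma IsNielsenMin.norm_apply (hφ : IsNielsenMin φ) (c : α × Bool) (l : List (α × Bool))
    (hl : FreeGroup.IsReduced (c :: l)) :
    (∀ d ≠ c, gromov (φ (mk [d])) (φ (mk [c])) < gromov (φ (mk [c])) (φ (mk (c :: l)))) ∧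
      1 ≤ (φ (mk (c :: l))).norm ∧ ((φ (mk (c :: l))).norm = 1 → l = []) := by
  have hpos : ∀ c, 1 ≤ (φ (mk [c])).norm := fun c => by
    rw [Nat.one_le_iff_ne_zero, ne_eq, FreeGroup.norm_eq_zero]
    exact apply_letter_ne_one φ c
  induction l generalizing c with
  | nil =>
    refine ⟨fun d hd => ?_, hpos c, fun _ => rfl⟩
    have := hφ.two_mul_gromov_le hd.symm
    have := hpos c
    rw [gromov_comm, gromov_self]
    omega
  | cons e l ih =>
    rw [FreeGroup.isReduced_cons_cons] at hl
    obtain ⟨ih1, ih2, ih3⟩ := ih e hl.2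
    have hce : bar c ≠ e := by
      rintro rfl
      have := hl.1 rfl
      simp [bar] at this
    have hlt := ih1 _ hce
    have hprod : φ (mk (c :: e :: l)) = (φ (mk [bar c]))⁻¹ * φ (mk (e :: l)) := by
      rw [mk_bar, _root_.map_inv, inv_inv, ← _root_.map_mul, mul_mk]
      rfl
    have hc : φ (mk [c]) = (φ (mk [bar c]))⁻¹ := by rw [mk_bar, _root_.map_inv, inv_inv]
    have h1 := norm_inv_mul (φ (mk [bar c])) (φ (mk (e :: l)))
    rw [gromov_eq_of_lt hlt, ← hprod] at h1
    have h2 := norm_inv_mul (φ (mk [c])) (φ (mk (c :: e :: l)))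
    have h3 : (φ (mk [c]))⁻¹ * φ (mk (c :: e :: l)) = φ (mk (e :: l)) := by
      rw [hprod, hc, inv_inv, mul_inv_cancel_left]
    rw [h3] at h2
    have hn : (φ (mk [c])).norm = (φ (mk [bar c])).norm := by rw [hc, norm_inv_eq]
    have h4 := hφ.two_mul_gromov_le hce
    refine ⟨fun d hd => ?_, by omega, fun h => ?_⟩
    · have := hφ.gromov_add_lt hd hce
      omega
    · have := gromov_le_right (φ (mk [e])) (φ (mk (e :: l)))
      have := hpos (bar c)
      omega

/-- A Nielsen minimal automorphism permutes the letters. -/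
theorem IsNielsenMin.exists_letter (hφ : IsNielsenMin φ) (d : α × Bool) :
    ∃ c : α × Bool, φ (mk [c]) = mk [d] := by
  obtain ⟨x, hx⟩ := φ.surjective (mk [d])
  have hd : (mk [d] : FreeGroup α).norm = 1 := by simp [FreeGroup.norm]
  cases h : x.toWord with
  | nil =>
    rw [toWord_eq_nil_iff] at h
    simp [← hx, h] at hd
  | cons c l =>
    have hxm : x = mk (c :: l) := by rw [← h, mk_toWord]
    have hr : FreeGroup.IsReduced (c :: l) := h ▸ isReduced_toWord
    have := (hφ.norm_apply c l hr).2.2 (by rw [← hxm, hx, hd])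
    subst this
    exact ⟨c, by rw [← hxm, hx]⟩

end Nielsen

section LetterAut

open FreeGroup

variable {α : Type*}

lemma mk_letter_false (i : α) : (mk [(i, false)] : FreeGroup α) = (of i)⁻¹ := rfl

lemma mk_letter_true (i : α) : (mk [(i, true)] : FreeGroup α) = of i := rfl

lemma mk_letter_injective : Function.Injective fun c : α × Bool => (mk [c] : FreeGroup α) := by
  classical
  intro c d h
  simpa using congrArg toWord h

lemma aut_ext_of {f g : MulAut (FreeGroup α)} (h : ∀ i, f (of i) = g (of i)) : f = g :=
  MulEquiv.toMonoidHom_injective (FreeGroup.ext_hom _ _ h)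

lemma fst_ne_of_letterAut {σ : MulAut (FreeGroup α)} {s : α × Bool → α × Bool}
    (hσ : ∀ c, σ (mk [c]) = mk [s c]) {c d : α × Bool} (h : c.1 ≠ d.1) : (s c).1 ≠ (s d).1 := by
  intro h'
  have hinj : ∀ e, σ (mk [c]) = σ (mk [e]) → c = e := fun e he =>
    mk_letter_injective (σ.injective he)
  rcases eq_or_eq_bar h' with h'' | h''
  · exact h (congrArg Prod.fst (hinj d (by rw [hσ, hσ, h''])))
  · have hcd := hinj (bar d) (by rw [hσ, h'', mk_bar, mk_bar, _root_.map_inv, hσ])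
    exact h (by rw [hcd, bar_fst])

lemma freeGroupCongr_letter (π : Equiv.Perm α) (c : α × Bool) :
    freeGroupCongr π (mk [c]) = mk [(π c.1, c.2)] := rfl

lemma freeGroupCongr_of (π : Equiv.Perm α) (i : α) : freeGroupCongr π (of i) = of (π i) := rfl

variable [DecidableEq α]

lemma transvection_of {c d : α × Bool} (h : c.1 ≠ d.1) (i : α) : transvection c d h (of i) =
    if i = d.1 then (if d.2 then mk [c] * of i else of i * (mk [c])⁻¹) else of i := by
  change transvectionHom c d (of i) = _
  simp [transvectionHom]

lemma transvection_inv {c d : α × Bool} (h : c.1 ≠ d.1) :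
    (transvection c d h)⁻¹ = transvection (bar c) d h := MulEquiv.ext fun _ => rfl

lemma letterAut_mul_transvection {σ : MulAut (FreeGroup α)} {s : α × Bool → α × Bool}
    (hσ : ∀ c, σ (mk [c]) = mk [s c]) {c d : α × Bool} (h : c.1 ≠ d.1) :
    σ * transvection c d h * σ⁻¹ =
      transvection (s c) (s d) (fst_ne_of_letterAut hσ h) := by
  rw [mul_inv_eq_iff_eq_mul]
  have h' := fst_ne_of_letterAut hσ h
  refine MulEquiv.toMonoidHom_injective (hom_ext_letter d ?_ fun e he => ?_)
  · change σ (transvection c d h (mk [d])) = transvection (s c) (s d) h' (σ (mk [d]))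
    rw [transvection_self, hσ, transvection_self, _root_.map_mul, hσ, hσ]
  · change σ (transvection c d h (mk [e])) = transvection (s c) (s d) h' (σ (mk [e]))
    rw [transvection_of_ne h he, hσ, transvection_of_ne _ (fst_ne_of_letterAut hσ he)]

/-- The endomorphism inverting one generator. -/
def inversionHom (i : α) : FreeGroup α →* FreeGroup α :=
  FreeGroup.lift fun j => if j = i then (of j)⁻¹ else of j

lemma inversionHom_comp_self (i : α) :
    (inversionHom i).comp (inversionHom i) = MonoidHom.id _ := by
  ext j
  by_cases h : j = i <;> simp [inversionHom, h]

/-- The automorphism inverting one generator. -/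
def inversion (i : α) : MulAut (FreeGroup α) :=
  (inversionHom i).toMulEquiv (inversionHom i) (inversionHom_comp_self i)
    (inversionHom_comp_self i)

lemma inversion_of (i j : α) : inversion i (of j) = if j = i then (of j)⁻¹ else of j := by
  change inversionHom i (of j) = _
  simp [inversionHom]

lemma inversion_mul_self (i : α) : inversion i * inversion i = 1 := by
  refine aut_ext_of fun j => ?_
  by_cases h : j = i <;> simp [inversion_of, h]

lemma inversion_letter (i : α) (c : α × Bool) :
    inversion i (mk [c]) = mk [if c.1 = i then bar c else c] := by
  obtain ⟨j, s⟩ := c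
  cases s <;> by_cases h : j = i <;>
    simp [h, mk_letter_false, mk_letter_true, inversion_of]

/-- A normal subgroup containing one transvection contains all of them. -/
lemma transvection_mem_of_normal (M : Subgroup (MulAut (FreeGroup α))) [M.Normal]
    {c d : α × Bool} (h : c.1 ≠ d.1) (hM : transvection c d h ∈ M) {c' d' : α × Bool}
    (h' : c'.1 ≠ d'.1) : transvection c' d' h' ∈ M := by
  have hbarl : ∀ {c d : α × Bool} (h : c.1 ≠ d.1), transvection c d h ∈ M →
      transvection (bar c) d h ∈ M := fun h hm => by
    rw [← transvection_inv]
    exact inv_mem hm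
  have hbarr : ∀ {c d : α × Bool} (h : c.1 ≠ d.1), transvection c d h ∈ M →
      transvection c (bar d) h ∈ M := fun {c d} h hm => by
    have := (inferInstance : M.Normal).conj_mem _ hm (inversion d.1)
    rw [letterAut_mul_transvection (inversion_letter d.1)] at this
    simpa [h] using this
  obtain ⟨π, hπc, hπd⟩ : ∃ π : Equiv.Perm α, π c.1 = c'.1 ∧ π d.1 = d'.1 := by
    refine ⟨Equiv.swap (Equiv.swap c.1 c'.1 d.1) d'.1 * Equiv.swap c.1 c'.1, ?_, by simp⟩
    rw [Equiv.Perm.mul_apply, Equiv.swap_apply_left, Equiv.swap_apply_of_ne_of_ne _ h']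
    nth_rw 1 [← Equiv.swap_apply_left c.1 c'.1]
    exact fun h'' => h ((Equiv.swap c.1 c'.1).injective h'')
  have hπ := (inferInstance : M.Normal).conj_mem _ hM (freeGroupCongr π)
  rw [letterAut_mul_transvection (σ := freeGroupCongr π) (freeGroupCongr_letter π)] at hπ
  rcases eq_or_eq_bar (c := c') (d := (π c.1, c.2)) hπc.symm with rfl | rfl <;>
    rcases eq_or_eq_bar (c := d') (d := (π d.1, d.2)) hπd.symm with rfl | rfl
  · exact hπ
  · exact hbarr _ hπ
  · exact hbarl _ hπ
  · exact hbarl _ (hbarr _ hπ)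

/-- The automorphism `x ↦ y`, `y ↦ x⁻¹`. -/
def rotation (i j : α) (h : i ≠ j) : MulAut (FreeGroup α) :=
  transvection (j, true) (i, true) h.symm * transvection (i, false) (j, true) h *
    transvection (j, false) (i, false) h.symm

lemma rotation_mul_inversion {i j : α} (h : i ≠ j) :
    rotation i j h * inversion j = freeGroupCongr (Equiv.swap i j) := by
  refine aut_ext_of fun k => ?_
  rw [freeGroupCongr_of]
  by_cases hi : k = i
  · subst hi
    simp [rotation, inversion_of, transvection_of, h, h.symm, mk_letter_false]
  · by_cases hj : k = j
    · subst hj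
      simp [rotation, inversion_of, transvection_of, h.symm, mk_letter_false, mk_letter_true]
    · simp [rotation, inversion_of, transvection_of, hi, hj, Equiv.swap_apply_of_ne_of_ne]

lemma rotation_mul_self {i j : α} (h : i ≠ j) :
    rotation i j h * rotation i j h = inversion i * inversion j := by
  refine aut_ext_of fun k => ?_
  by_cases hi : k = i
  · subst hi
    simp [rotation, inversion_of, transvection_of, h, h.symm, mk_letter_false, mk_letter_true]
  · by_cases hj : k = j
    · subst hj
      simp [rotation, inversion_of, transvection_of, h, h.symm, mk_letter_false, mk_letter_true]
    · simp [rotation, inversion_of, transvection_of, hi, hj]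

/-- Automorphisms permuting the letters are generated by transvections and one inversion. -/
lemma letterAut_mem [Fintype α] (H : Subgroup (MulAut (FreeGroup α)))
    (hH : ∀ (c d : α × Bool) (h : c.1 ≠ d.1), transvection c d h ∈ H) (i₀ : α)
    (hi₀ : inversion i₀ ∈ H) {σ : MulAut (FreeGroup α)} {s : α × Bool → α × Bool}
    (hσ : ∀ c, σ (mk [c]) = mk [s c]) : σ ∈ H := by
  have hrot : ∀ i j h, rotation i j h ∈ H := fun i j h =>
    mul_mem (mul_mem (hH _ _ _) (hH _ _ _)) (hH _ _ _)
  have hinv : ∀ i, inversion i ∈ H := fun i => by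
    by_cases h : i = i₀
    · rwa [h]
    · have := mul_mem (hrot i i₀ h) (hrot i i₀ h)
      rw [rotation_mul_self] at this
      exact (mul_mem_cancel_right hi₀).1 this
  have hperm : ∀ π : Equiv.Perm α, (freeGroupCongr π : MulAut (FreeGroup α)) ∈ H := by
    intro π
    induction π using Equiv.Perm.swap_induction_on with
    | one =>
      have : (freeGroupCongr (1 : Equiv.Perm α) : MulAut (FreeGroup α)) = 1 :=
        aut_ext_of fun _ => rfl
      rw [this]
      exact one_mem _
    | swap_mul f x y hxy ih =>
      have : (freeGroupCongr (Equiv.swap x y * f) : MulAut (FreeGroup α)) =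
          (rotation x y hxy * inversion y) * freeGroupCongr f := by
        rw [rotation_mul_inversion]
        exact aut_ext_of fun _ => rfl
      rw [this]
      exact mul_mem (mul_mem (hrot _ _ _) (hinv _)) ih
  have hsign : ∀ (S : Finset α) (τ : MulAut (FreeGroup α)),
      (∀ i ∈ S, τ (of i) = of i ∨ τ (of i) = (of i)⁻¹) → (∀ i ∉ S, τ (of i) = of i) → τ ∈ H := by
    intro S
    induction S using Finset.induction_on with
    | empty =>
      intro τ _ h
      rw [show τ = 1 from aut_ext_of fun i => h i (by simp)]
      exact one_mem _
    | insert a S ha ih =>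
      intro τ h1 h2
      rcases h1 a (Finset.mem_insert_self _ _) with h | h
      · refine ih τ (fun i hi => h1 i (Finset.mem_insert_of_mem hi)) fun i hi => ?_
        by_cases hia : i = a
        · rwa [hia]
        · exact h2 i (by simp [hia, hi])
      · rw [← mul_mem_cancel_right (hinv a)]
        refine ih _ (fun i hi => ?_) fun i hi => ?_
        · have hia : i ≠ a := fun h => ha (h ▸ hi)
          simpa [inversion_of, hia] using h1 i (Finset.mem_insert_of_mem hi)
        · by_cases hia : i = a
          · simp [inversion_of, hia, h]
          · simpa [inversion_of, hia] using h2 i (by simp [hia, hi])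
  have hbij : Function.Bijective fun i => (s (i, true)).1 := by
    refine Finite.injective_iff_bijective.1 fun i j hij => ?_
    by_contra hne
    exact fst_ne_of_letterAut hσ (c := (i, true)) (d := (j, true)) hne hij
  let π := Equiv.ofBijective _ hbij
  rw [← mul_mem_cancel_left (inv_mem (hperm π))]
  refine hsign Finset.univ _ (fun i _ => ?_) fun i hi => absurd (Finset.mem_univ i) hi
  have h1 : σ (of i) = mk [s (i, true)] := hσ (i, true)
  have h2 : freeGroupCongr π (mk [(i, (s (i, true)).2)]) = mk [s (i, true)] := rfl
  have h3 : ((freeGroupCongr π : MulAut (FreeGroup α))⁻¹ * σ) (of i) =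
      mk [(i, (s (i, true)).2)] := by
    rw [MulAut.mul_apply, h1, ← h2]
    exact MulAut.inv_apply_self _ (freeGroupCongr π) _
  rw [h3]
  cases (s (i, true)).2
  · exact Or.inr rfl
  · exact Or.inl rfl

end LetterAut

section Det

open FreeGroup

variable {n : ℕ}

lemma coe_detρ (g : FrAut n) : (detρ n g : ℤ) = (mat g).det := rfl

lemma detρ_transvection {c d : Fin n × Bool} (h : c.1 ≠ d.1) :
    detρ n (transvection c d h) = 1 := by
  obtain ⟨a, s⟩ := c
  obtain ⟨b, t⟩ := d
  have hmat : mat (transvection (a, s) (b, t) h) =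
      Matrix.transvection a b (if s = t then 1 else -1) := by
    ext i j
    simp only [mat, Matrix.of_apply, transvection_of, Matrix.transvection, Matrix.add_apply,
      Matrix.one_apply, Matrix.single_apply]
    by_cases hj : j = b
    · cases s <;> cases t <;> by_cases ha : a = i <;>
        simp [hj, ha, expSum, mk_letter_false, mk_letter_true, eq_comm, add_comm]
    · simp [hj, Ne.symm hj, expSum, eq_comm]
  rw [← Units.val_inj, coe_detρ, hmat, Matrix.det_transvection_of_ne _ _ h, Units.val_one]

lemma detρ_inversion (i : Fin n) : detρ n (inversion i) = -1 := by
  have hmat : mat (inversion i) = Matrix.diagonal fun j => if j = i then (-1 : ℤ) else 1 := by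
    ext k j
    simp only [mat, Matrix.of_apply, inversion_of, Matrix.diagonal_apply]
    by_cases hj : j = i <;> by_cases hk : k = j <;> simp_all [expSum, eq_comm]
  rw [← Units.val_inj, coe_detρ, hmat, Matrix.det_diagonal]
  simp

/-- A normal subgroup containing a transvection contains all automorphisms of determinant one. -/
theorem ker_detρ_le (M : Subgroup (FrAut n)) [M.Normal] {c d : Fin n × Bool} (h : c.1 ≠ d.1)
    (hM : transvection c d h ∈ M) : (detρ n).ker ≤ M := by
  have hT : ∀ (c d : Fin n × Bool) (h : c.1 ≠ d.1), transvection c d h ∈ M ⊓ (detρ n).ker :=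
    fun c d h' => ⟨transvection_mem_of_normal M h hM h', detρ_transvection h'⟩
  intro g hg
  obtain ⟨m, hm, hmin⟩ := exists_isNielsenMin _ hT g
  choose s hs using fun d => hmin.exists_letter d
  have hσ : ∀ e, (g * m)⁻¹ (mk [e]) = mk [s e] := fun e => by
    rw [← hs e, MulAut.inv_apply_self]
  have hmem := letterAut_mem (M ⊓ (detρ n).ker ⊔ Subgroup.zpowers (inversion c.1))
    (fun c d h => Subgroup.mem_sup_left (hT c d h)) c.1
    (Subgroup.mem_sup_right (Subgroup.mem_zpowers _)) hσ
  rw [Subgroup.mem_sup_of_normal_left] at hmem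
  obtain ⟨m', hm', y, hy, hmy⟩ := hmem
  have hdet : detρ n (g * m)⁻¹ = 1 := by
    rw [_root_.map_inv, _root_.map_mul, hg, hm.2, one_mul, inv_one]
  have hy1 : y = 1 := by
    obtain ⟨k, rfl⟩ := hy
    simp only at hmy ⊢
    rw [← hmy, _root_.map_mul, hm'.2, one_mul, _root_.map_zpow, detρ_inversion] at hdet
    have hsq : inversion c.1 ^ (2 : ℤ) = 1 := by
      rw [zpow_two, inversion_mul_self]
    rcases Int.even_or_odd' k with ⟨j, rfl | rfl⟩
    · rw [_root_.zpow_mul, hsq, _root_.one_zpow]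
    · rw [Odd.neg_one_zpow ⟨j, rfl⟩] at hdet
      exact absurd hdet (by decide)
  rw [hy1, mul_one] at hmy
  have h1 : (g * m)⁻¹ ∈ M := hmy ▸ hm'.1
  exact (M.mul_mem_cancel_right hm.1).1 (M.inv_mem_iff.1 h1)

end Det

section NormalFormTransvection

open FreeGroup

/-- A normal subgroup containing an automorphism in normal form contains a transvection. -/
lemma exists_transvection_mem {α κ : Type*} [DecidableEq α] (s : Option (κ ⊕ κ) ≃ α) (i : κ)
    {t : MulAut (FreeGroup α)} (h0 : t (of (s none)) = of (s none))
    (hl : ∀ i, t (of (s (some (Sum.inl i)))) = of (s (some (Sum.inr i))))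
    (hr : ∀ i, t (of (s (some (Sum.inr i)))) =
      of (s none) * of (s (some (Sum.inl i))) * (of (s none))⁻¹)
    (M : Subgroup (MulAut (FreeGroup α))) [M.Normal] (ht : t ∈ M) :
    ∃ (c d : α × Bool) (h : c.1 ≠ d.1), transvection c d h ∈ M := by
  set z := s none
  set y := s (some (Sum.inl i)) with hy
  set y' := s (some (Sum.inr i)) with hy'
  have hty : t (of y) = of y' := hl i
  have hzy : z ≠ y := by simp [z, y]
  have hzy' : z ≠ y' := by simp [z, y']
  have hyy' : y ≠ y' := by simp [y, y']
  let g := transvection (z, false) (y, false) hzy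
  let g' := transvection (z, false) (y', false) hzy'
  have hconj : t * g * t⁻¹ = g' := by
    rw [mul_inv_eq_iff_eq_mul]
    refine aut_ext_of fun x => ?_
    obtain ⟨q, rfl⟩ := s.surjective x
    rcases q with _ | j | j
    · change t (g (of z)) = g' (t (of z))
      simp [g, g', transvection_of, h0, hzy, hzy']
    · rw [MulAut.mul_apply, MulAut.mul_apply, hl]
      by_cases hj : j = i
      · subst hj
        simp [g, g', transvection_of, ← hy, ← hy', hty, h0, mk_letter_false]
      · simp [g, g', transvection_of, hy, hy', hl, hj]
    · rw [MulAut.mul_apply, MulAut.mul_apply, hr]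
      simp [g, g', transvection_of, hy, hy', hr, z]
  let k := transvection (y, true) (y', true) hyy'
  let τ := transvection (z, false) (y', true) hzy'
  have hh : g * g'⁻¹ ∈ M := by
    have h1 := (inferInstance : M.Normal).conj_mem t ht g
    have h2 := mul_mem h1 (inv_mem ht)
    rw [← hconj]
    convert h2 using 1
    group
  have hk : (g * g'⁻¹)⁻¹ * (k * (g * g'⁻¹) * k⁻¹) = τ := by
    rw [inv_mul_eq_iff_eq_mul, mul_inv_eq_iff_eq_mul]
    refine aut_ext_of fun x => ?_
    by_cases h1 : x = y
    · subst h1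
      simp [g, g', k, τ, transvection_inv, transvection_of, mk_letter_false, bar, hzy', hyy']
    · by_cases h2 : x = y'
      · subst h2
        simp [g, g', k, τ, transvection_inv, transvection_of, mk_letter_false, mk_letter_true,
          bar, hzy, hzy', hyy', hyy'.symm, mul_assoc]
      · simp [g, g', k, τ, transvection_inv, transvection_of, bar, h1, h2]
  refine ⟨_, _, hzy', (?_ : τ ∈ M)⟩
  rw [← hk]
  exact mul_mem (inv_mem hh) ((inferInstance : M.Normal).conj_mem _ hh k)

end NormalFormTransvection

/-- For `n ≥ 3`, if `f ∈ Out(F_n)` has order 2 and cannot be lifted to a finite order element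
of `Aut(F_n)`, then `N(f) = SOut(F_n)` if `det ρ̄(f) = 1` and `N(f) = Out(F_n)` if
`det ρ̄(f) = -1`. -/
theorem normalClosure_order_two_out_no_finite_lift (n : ℕ) (hn : 3 ≤ n) (f : OutF n)
    (hf : orderOf f = 2)
    (hnl : ¬ ∃ h : FrAut n, IsOfFinOrder h ∧ toOut n h = f) :
    (detρOut n f = 1 → Subgroup.normalClosure {f} = SOut n) ∧
    (detρOut n f = -1 → Subgroup.normalClosure {f} = ⊤) := by
  obtain ⟨κ, e, t, htf, h0, hl, hr⟩ := exists_normal_form hn hf hnl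
  let s : Option (κ ⊕ κ) ≃ Fin n := Equiv.ofFreeGroupEquiv e
  obtain ⟨i⟩ : Nonempty κ := by
    by_contra hκ
    rw [not_nonempty_iff] at hκ
    have h1 := Nat.card_congr s
    simp at h1
    omega
  let E : FrAut n := (FreeGroup.freeGroupCongr s.symm).trans e
  have hE : ∀ q, E (FreeGroup.of (s q)) = e (FreeGroup.of q) := fun q => by simp [E]
  have hE' : ∀ q, E⁻¹ (e (FreeGroup.of q)) = FreeGroup.of (s q) := fun q => by
    rw [← hE, MulAut.inv_apply_self]
  let M : Subgroup (FrAut n) := (Subgroup.normalClosure {f}).comap (toOut n)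
  have htM : t ∈ M := by
    rw [Subgroup.mem_comap, htf]
    exact Subgroup.subset_normalClosure rfl
  have htM' : E⁻¹ * t * E ∈ M := by
    simpa using (inferInstance : M.Normal).conj_mem t htM E⁻¹
  obtain ⟨c, d, hcd, hτ⟩ := exists_transvection_mem s i (t := E⁻¹ * t * E)
    (by simp only [MulAut.mul_apply, hE, h0, hE'])
    (fun i => by simp only [MulAut.mul_apply, hE, hl, hE'])
    (fun i => by simp only [MulAut.mul_apply, hE, hr, _root_.map_mul, _root_.map_inv, hE']) M htM'
  have hle := ker_detρ_le M hcd hτ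
  have hSOut : SOut n ≤ Subgroup.normalClosure {f} := by
    intro x hx
    obtain ⟨g, rfl⟩ := toOut_surjective n x
    exact hle hx
  have : (SOut n).Normal := MonoidHom.normal_ker (detρOut n)
  refine ⟨fun hdet => le_antisymm (Subgroup.normalClosure_le_normal ?_) hSOut, fun hdet => ?_⟩
  · rw [Set.singleton_subset_iff]
    exact hdet
  · refine (Subgroup.eq_top_iff' _).2 fun x => ?_
    have hfN : f ∈ Subgroup.normalClosure {f} := Subgroup.subset_normalClosure rfl
    rcases Int.units_eq_one_or (detρOut n x) with h | h
    · exact hSOut h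
    · refine (Subgroup.mul_mem_cancel_right _ hfN).1 (hSOut ?_)
      rw [SOut, MonoidHom.mem_ker, _root_.map_mul, h, hdet]
      decide

end NormalClosurePaper
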